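/- arXiv:2107.07396 — 2 statements merged into one kernel-verified Lean document; each statement's English description precedes it below -/
import Mathlib

section
/- Suppose I satisfies (I1)–(I7). Then c_M ≥ a > 0 and the reduced functional admits a Cerami sequence at level c_M: there exists a sequence (v_n) ⊂ X⁺ such that J(m(v_n)) → c_M and (1 + ‖v_n‖) · sup{ |J'(m(v_n))[φ]| : φ ∈ X⁺, ‖φ‖ ≤ 1 } → 0 as n → ∞. -/
/-!
The theorem is a mountain pass principle for the reduced functional `Φ v = J (m v)` on the Hilbert
space `H`.

*Reduction.* By (I5), `m v` is the unique minimizer of `I` on the fibre over `v`. If `v n → v`, then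
(I4) bounds `m (v n)`, reflexivity gives weakly convergent subsequences (`exists_weak_subseq`),
(I2) and uniqueness identify the limit as `m v`, and (I3) makes the convergence strong; so `m` is
continuous (`continuous_reduction`). Since `m v` maximizes `J` on its fibre, an envelope argument
shows that `Φ` is `C¹` with `Φ' v φ = J' (m v) (φ, 0)` (`hasFDerivAt_reduced`). Paths in `M` are
exactly the images under `m` of paths in `H`, so `c_M` is a mountain pass level of `Φ`. Paths cross
the sphere of radius `r`, where `Φ v ≥ J (v, 0) ≥ a`, and (I7) makes `Φ` negative far out on any ray.

*Mountain pass.* Suppose `(1 + ‖v‖) ‖∇Φ v‖ > ε` whenever `|Φ v - c| ≤ ε`. On paths with fixed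
endpoints, order `τ` below `σ` when
`‖τ t - σ t‖ ≤ (1 + ‖σ t‖) (exp (K (max Φ∘σ - max Φ∘τ)) - 1)` for all `t`. The exponential makes
this relation transitive, and decreasing sequences converge uniformly, so the iteration proving
Ekeland's principle yields an almost optimal path which cannot be lowered (`exists_minimal_path`).
The gradient of `Φ` is continuous, hence a small step along the cut-off field
`-(1 + ‖v‖) ∇Φ v / ‖∇Φ v‖` does lower it (`exists_lower_path`), a contradiction.
-/

open MeasureTheory Filter Real Set
open scoped RealInnerProductSpace ENNReal Topology

noncomputable section

/-! ### Weak sequential compactness in reflexive spaces -/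

/-- In a reflexive space a bounded sequence converges weakly along every ultrafilter: the
ultrafilter limits of the numbers `f (w n)` form an element of the bidual. -/
lemma exists_weak_ultralimit {W : Type*} [NormedAddCommGroup W] [NormedSpace ℝ W]
    (hrefl : Function.Surjective ⇑(NormedSpace.inclusionInDoubleDual ℝ W))
    (w : ℕ → W) (C : ℝ) (hC : ∀ n, ‖w n‖ ≤ C) (U : Ultrafilter ℕ) :
    ∃ x : W, ∀ f : W →L[ℝ] ℝ, Tendsto (fun n => f (w n)) U (𝓝 (f x)) := by
  have hbd : ∀ (f : W →L[ℝ] ℝ) n, ‖f (w n)‖ ≤ C * ‖f‖ := fun f n =>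
    (f.le_opNorm _).trans (by rw [mul_comm]; gcongr; exact hC n)
  have hlim : ∀ f : W →L[ℝ] ℝ, ∃ l : ℝ, ‖l‖ ≤ C * ‖f‖ ∧
      Tendsto (fun n => f (w n)) U (𝓝 l) := by
    intro f
    obtain ⟨l, hl, hl'⟩ := (isCompact_closedBall (0 : ℝ) (C * ‖f‖)).ultrafilter_le_nhds
      (U.map (fun n => f (w n))) (by
        rw [le_principal_iff]
        exact Ultrafilter.mem_map.2 (Eventually.of_forall fun n => by simpa using hbd f n))
    exact ⟨l, by simpa using hl, hl'⟩
  choose L hL hLlim using hlim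
  let Λ : StrongDual ℝ (StrongDual ℝ W) := LinearMap.mkContinuous
    { toFun := L
      map_add' := fun f g => tendsto_nhds_unique (hLlim (f + g)) ((hLlim f).add (hLlim g))
      map_smul' := fun c f => tendsto_nhds_unique (hLlim (c • f)) ((hLlim f).const_mul c) } C hL
  obtain ⟨x, hx⟩ := hrefl Λ
  refine ⟨x, fun f => ?_⟩
  have h : f x = L f := by
    have := congrArg (fun T : StrongDual ℝ (StrongDual ℝ W) => T f) hx
    simpa [Λ] using this
  rw [h]
  exact hLlim f

/-- Bounded sequences in a reflexive space have weakly convergent subsequences. The closed span of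
the sequence is separable, hence separated by countably many functionals; along a subsequence on
which all of these converge, every ultrafilter yields the same weak limit. -/
lemma exists_weak_subseq {W : Type*} [NormedAddCommGroup W] [NormedSpace ℝ W]
    (hrefl : Function.Surjective ⇑(NormedSpace.inclusionInDoubleDual ℝ W))
    (w : ℕ → W) (C : ℝ) (hC : ∀ n, ‖w n‖ ≤ C) :
    ∃ φ : ℕ → ℕ, StrictMono φ ∧ ∃ x : W, ∀ f : W →L[ℝ] ℝ,
      Tendsto (fun n => f (w (φ n))) atTop (𝓝 (f x)) := by
  set Y : Submodule ℝ W := (Submodule.span ℝ (range w)).topologicalClosure with hY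
  have hwY : ∀ n, w n ∈ Y := fun n =>
    Submodule.le_topologicalClosure _ (Submodule.subset_span (mem_range_self n))
  have hYc : IsClosed (Y : Set W) := Submodule.isClosed_topologicalClosure _
  have hYsep : TopologicalSpace.IsSeparable (Y : Set W) := by
    rw [hY, Submodule.topologicalClosure_coe]
    exact ((countable_range w).isSeparable.span).closure
  obtain ⟨D, -, hDc, hDY⟩ := hYsep.exists_countable_dense_subset
  have hdual : ∀ d : D, ∃ f : W →L[ℝ] ℝ, ‖f‖ ≤ 1 ∧ f d = ‖(d : W)‖ := fun d => by
    simpa using exists_dual_vector'' ℝ (d : W)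
  choose F hF1 hF using hdual
  have hsepY : ∀ y ∈ Y, (∀ d, F d y = 0) → y = 0 := by
    intro y hy h0
    by_contra hne
    have hpos : 0 < ‖y‖ / 2 := by positivity
    obtain ⟨d, hd, hyd⟩ := Metric.mem_closure_iff.1 (hDY hy) _ hpos
    rw [dist_eq_norm] at hyd
    have h1 : ‖d‖ ≤ ‖y - d‖ := by
      have h2 : F ⟨d, hd⟩ (y - d) = -‖d‖ := by
        rw [map_sub, h0, hF]; simp
      have h3 := (F ⟨d, hd⟩).le_of_opNorm_le (hF1 _) (y - d)
      rw [h2, norm_neg, norm_norm, one_mul] at h3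
      exact h3
    have h4 := norm_add_le (y - d) d
    rw [sub_add_cancel] at h4
    linarith
  have : Countable D := hDc
  have hK : IsCompact (Set.pi univ fun _ : D => Metric.closedBall (0 : ℝ) C) :=
    isCompact_univ_pi fun _ => isCompact_closedBall _ _
  obtain ⟨l, -, φ, hφ, hl⟩ := hK.tendsto_subseq (x := fun n d => F d (w n)) (fun n d _ => by
    have h := (F d).le_of_opNorm_le (hF1 d) (w n)
    have := hC n
    rw [mem_closedBall_zero_iff]
    linarith)
  rw [tendsto_pi_nhds] at hl
  choose X hX using exists_weak_ultralimit hrefl (w ∘ φ) C (fun n => hC _)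
  have hXY : ∀ U, X U ∈ Y := by
    intro U
    by_contra hn
    obtain ⟨f, u, h1, h2⟩ := geometric_hahn_banach_closed_point Y.convex hYc hn
    exact absurd (le_of_tendsto (hX U f) (Eventually.of_forall fun n => (h1 _ (hwY _)).le))
      (not_le.2 h2)
  have hXl : ∀ U : Ultrafilter ℕ, ↑U ≤ (atTop : Filter ℕ) → ∀ d, F d (X U) = l d := fun U hU d =>
    tendsto_nhds_unique (hX U (F d)) ((hl d).mono_left hU)
  have hyp : ↑(hyperfilter ℕ) ≤ (atTop : Filter ℕ) := Nat.hyperfilter_le_atTop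
  refine ⟨φ, hφ, X (hyperfilter ℕ), fun f => ?_⟩
  rw [tendsto_iff_ultrafilter]
  intro U hU
  have hEq : X U = X (hyperfilter ℕ) := by
    rw [← sub_eq_zero]
    refine hsepY _ (Y.sub_mem (hXY _) (hXY _)) fun d => ?_
    rw [map_sub, hXl U hU, hXl _ hyp, sub_self]
  rw [← hEq]
  exact hX U f

/-! ### The reduction map and the reduced functional -/

/-- Continuity of the reduction map. Along `v n → v` the points `m (v n)` stay bounded, and any weak
subsequential limit of their second components is again a minimizer over `v`, hence the unique one;
(I3) upgrades the convergence to the norm. -/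
lemma continuous_reduction {H W : Type*} [NormedAddCommGroup H]
    [NormedAddCommGroup W] [NormedSpace ℝ W]
    (hrefl : Function.Surjective ⇑(NormedSpace.inclusionInDoubleDual ℝ W))
    (I : H × W → ℝ) (hIc : Continuous I) (hI1 : ∀ u, 0 ≤ I u)
    (nrm : H × W → ℝ) (hnrm : ∀ u, nrm u = Real.sqrt (‖u.1‖ ^ 2 + ‖u.2‖ ^ 2))
    (hI2 : ∀ (u : ℕ → H × W) (u₀ : H × W),
      Tendsto (fun n => (u n).1) atTop (𝓝 u₀.1) →
      (∀ f : W →L[ℝ] ℝ, Tendsto (fun n => f (u n).2) atTop (𝓝 (f u₀.2))) →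
      I u₀ ≤ liminf (fun n => I (u n)) atTop)
    (hI3 : ∀ (u : ℕ → H × W) (u₀ : H × W),
      Tendsto (fun n => (u n).1) atTop (𝓝 u₀.1) →
      (∀ f : W →L[ℝ] ℝ, Tendsto (fun n => f (u n).2) atTop (𝓝 (f u₀.2))) →
      Tendsto (fun n => I (u n)) atTop (𝓝 (I u₀)) →
      Tendsto u atTop (𝓝 u₀))
    (hI4 : ∀ u : ℕ → H × W, Tendsto (fun n => nrm (u n)) atTop atTop →
      Tendsto (fun n => ‖(u n).1‖ + I (u n)) atTop atTop)
    (m : H → H × W) (hm1 : ∀ v, (m v).1 = v)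
    (hmin : ∀ v w, w ≠ (m v).2 → I (m v) < I (v, w)) : Continuous m := by
  have hmin' : ∀ v w, I (m v) ≤ I (v, w) := by
    intro v w
    by_cases h : w = (m v).2
    · have : m v = (v, w) := Prod.ext (hm1 v) h.symm
      rw [this]
    · exact (hmin v w h).le
  rw [continuous_iff_seqContinuous]
  intro v v₀ hv
  have hb : Tendsto (fun n => I (v n, (m v₀).2)) atTop (𝓝 (I (m v₀))) := by
    have h : Tendsto (fun n => (v n, (m v₀).2)) atTop (𝓝 (v₀, (m v₀).2)) :=
      hv.prodMk_nhds tendsto_const_nhds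
    have h2 : (v₀, (m v₀).2) = m v₀ := Prod.ext (hm1 v₀).symm rfl
    rw [h2] at h
    exact (hIc.tendsto _).comp h
  obtain ⟨B, hB⟩ := (hv.norm.add hb).bddAbove_range
  have hB' : ∀ n, ‖v n‖ + I (m (v n)) ≤ B := fun n =>
    (add_le_add_right (hmin' _ _) _).trans (hB (mem_range_self n))
  obtain ⟨C, hC⟩ : ∃ C, ∀ n, ‖(m (v n)).2‖ ≤ C := by
    by_contra! hcon
    choose k hk using fun j : ℕ => hcon j
    have h1 : Tendsto (fun j => nrm (m (v (k j)))) atTop atTop := by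
      refine tendsto_atTop_mono (fun j => ?_) tendsto_natCast_atTop_atTop
      rw [hnrm]
      refine (hk j).le.trans (Real.le_sqrt_of_sq_le ?_)
      nlinarith [sq_nonneg ‖(m (v (k j))).1‖]
    obtain ⟨j, hj⟩ := ((hI4 _ h1).eventually_gt_atTop B).exists
    rw [hm1] at hj
    exact absurd (hB' (k j)) (not_le.2 hj)
  refine tendsto_of_subseq_tendsto fun ns hns => ?_
  obtain ⟨φ, hφ, x, hx⟩ := exists_weak_subseq hrefl (fun n => (m (v (ns n))).2) C (fun n => hC _)
  refine ⟨φ, ?_⟩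
  have hsub : Tendsto (fun j => ns (φ j)) atTop atTop := hns.comp hφ.tendsto_atTop
  have hu1 : Tendsto (fun j => (m (v (ns (φ j)))).1) atTop (𝓝 v₀) := by
    simp only [hm1]
    exact hv.comp hsub
  have hbs := hb.comp hsub
  have hle : ∀ j, I (m (v (ns (φ j)))) ≤ ((fun n => I (v n, (m v₀).2)) ∘ fun j => ns (φ j)) j :=
    fun j => hmin' _ _
  have hbelow : IsBoundedUnder (· ≥ ·) atTop (fun j => I (m (v (ns (φ j))))) :=
    isBoundedUnder_of ⟨0, fun j => hI1 _⟩
  have habove : IsBoundedUnder (· ≤ ·) atTop (fun j => I (m (v (ns (φ j))))) :=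
    hbs.isBoundedUnder_le.mono_le (Eventually.of_forall hle)
  have hlow := hI2 (fun j => m (v (ns (φ j)))) (v₀, x) hu1 hx
  have hsup : limsup (fun j => I (m (v (ns (φ j))))) atTop ≤ I (m v₀) := by
    rw [← hbs.limsup_eq]
    exact limsup_le_limsup (Eventually.of_forall hle) hbelow.isCoboundedUnder_le
      hbs.isBoundedUnder_le
  have hxe : x = (m v₀).2 := by
    by_contra hne
    have h1 := hmin v₀ x hne
    have h2 := liminf_le_limsup habove hbelow
    linarith
  have hpt : (v₀, x) = m v₀ := Prod.ext (hm1 v₀).symm hxe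
  rw [hpt] at hlow
  refine hI3 (fun j => m (v (ns (φ j)))) (m v₀) ?_ ?_ ?_
  · rw [hm1]; exact hu1
  · rw [← hxe]; exact hx
  · exact tendsto_of_le_liminf_of_limsup_le hlow hsup habove hbelow

/-- Envelope theorem: if `m v` maximizes the `C¹` function `J` over the fibre above `v` and `m` is
continuous, the maximal value is differentiable and only the partial derivative of `J` in the
direction of the base contributes. -/
lemma hasFDerivAt_reduced {H W : Type*} [NormedAddCommGroup H] [NormedSpace ℝ H]
    [NormedAddCommGroup W] [NormedSpace ℝ W]
    (J : H × W → ℝ) (hJ : ContDiff ℝ 1 J)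
    (m : H → H × W) (hmc : Continuous m) (hm1 : ∀ v, (m v).1 = v)
    (hmax : ∀ v w, J (v, w) ≤ J (m v)) (v : H) :
    HasFDerivAt (fun v => J (m v))
      ((fderiv ℝ J (m v)).comp (ContinuousLinearMap.inl ℝ H W)) v := by
  have hst : HasStrictFDerivAt J (fderiv ℝ J (m v)) (m v) :=
    hJ.contDiffAt.hasStrictFDerivAt one_ne_zero
  have hsnd : Continuous fun v' => (m v').2 := continuous_snd.comp hmc
  have hmv : ∀ v, (v, (m v).2) = m v := fun v => Prod.ext (hm1 v).symm rfl
  -- The increments of `J` over the fixed fibre points `(m v').2` and `(m v).2` bound the increment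
  -- of the maximal value from above and from below.
  have hup := hst.isLittleO.comp_tendsto (k := fun v' : H => (m v', (v, (m v').2))) (l' := 𝓝 v) (by
    have : Continuous (fun v' : H => (m v', (v, (m v').2))) := by fun_prop
    simpa [hmv] using this.tendsto v)
  have hlo := hst.isLittleO.comp_tendsto (k := fun v' : H => ((v', (m v).2), m v)) (l' := 𝓝 v) (by
    have : Continuous (fun v' : H => ((v', (m v).2), m v)) := by fun_prop
    simpa [hmv] using this.tendsto v)
  refine .of_isLittleO ?_
  rw [Asymptotics.isLittleO_iff] at hup hlo ⊢
  intro c hc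
  filter_upwards [hup hc, hlo hc] with v' h1 h2
  have e1 : m v' - (v, (m v').2) = (v' - v, 0) := by
    rw [← hmv v']; simp
  have e2 : (v', (m v).2) - m v = (v' - v, 0) := by
    nth_rewrite 2 [← hmv v]; simp
  simp only [Function.comp, e1, e2, Prod.norm_mk, norm_zero, Real.norm_eq_abs,
    max_eq_left (norm_nonneg _)] at h1 h2
  simp only [ContinuousLinearMap.comp_apply, ContinuousLinearMap.inl_apply, Real.norm_eq_abs]
  have h3 := hmax v (m v').2
  have h4 := hmax v' (m v).2
  rw [abs_le] at *
  constructor <;> linarith [h1.1, h1.2, h2.1, h2.2]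

/-! ### Ekeland's principle on path spaces -/

/-- The supremum of a real function along a path parametrized by `T`. -/
def pathSup {T H : Type*} [TopologicalSpace T] [TopologicalSpace H] (Φ : H → ℝ) (σ : C(T, H)) : ℝ :=
  ⨆ t, Φ (σ t)

lemma le_pathSup {T H : Type*} [TopologicalSpace T] [CompactSpace T] [TopologicalSpace H]
    {Φ : H → ℝ} (hΦ : Continuous Φ) (σ : C(T, H)) (t : T) : Φ (σ t) ≤ pathSup Φ σ :=
  le_ciSup (f := fun t => Φ (σ t)) (isCompact_range (hΦ.comp σ.continuous)).bddAbove t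

/-- The order behind the Cerami form of Ekeland's principle: `τ` lies below `σ` if passing from `σ`
to `τ` lowers the supremum of `Φ` enough to pay for the displacement, which is measured relative to
the weight `1 + ‖σ t‖`. -/
def PathBelow {T H : Type*} [TopologicalSpace T] [NormedAddCommGroup H] (Φ : H → ℝ) (K : ℝ)
    (τ σ : C(T, H)) : Prop :=
  ∀ t, ‖τ t - σ t‖ ≤ (1 + ‖σ t‖) * (Real.exp (K * (pathSup Φ σ - pathSup Φ τ)) - 1)

section PathBelow

variable {T H : Type*} [TopologicalSpace T] [NormedAddCommGroup H] {Φ : H → ℝ} {K : ℝ}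

lemma PathBelow.rfl {σ : C(T, H)} : PathBelow Φ K σ σ := fun t => by simp

lemma PathBelow.weight_le {τ σ : C(T, H)} (h : PathBelow Φ K τ σ) (t : T) :
    1 + ‖τ t‖ ≤ (1 + ‖σ t‖) * Real.exp (K * (pathSup Φ σ - pathSup Φ τ)) := by
  have h1 := h t
  have h2 := norm_le_norm_add_norm_sub' (τ t) (σ t)
  linarith

lemma PathBelow.trans {ρ τ σ : C(T, H)} (h₁ : PathBelow Φ K ρ τ) (h₂ : PathBelow Φ K τ σ) :
    PathBelow Φ K ρ σ := by
  intro t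
  have hexp : Real.exp (K * (pathSup Φ σ - pathSup Φ ρ)) =
      Real.exp (K * (pathSup Φ σ - pathSup Φ τ)) * Real.exp (K * (pathSup Φ τ - pathSup Φ ρ)) := by
    rw [← Real.exp_add]; congr 1; ring
  have hw := h₂.weight_le t
  have hρ := h₁ t
  have hτ := h₂ t
  have htri := norm_sub_le_norm_sub_add_norm_sub (ρ t) (τ t) (σ t)
  have hge : 0 ≤ Real.exp (K * (pathSup Φ τ - pathSup Φ ρ)) - 1 := by
    have h0 : 0 ≤ (1 + ‖τ t‖) * (Real.exp (K * (pathSup Φ τ - pathSup Φ ρ)) - 1) :=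
      (norm_nonneg _).trans hρ
    exact nonneg_of_mul_nonneg_right h0 (by positivity)
  have := mul_le_mul_of_nonneg_right hw hge
  rw [hexp]
  linarith

lemma PathBelow.pathSup_le [Nonempty T] (hK : 0 < K) {τ σ : C(T, H)} (h : PathBelow Φ K τ σ) :
    pathSup Φ τ ≤ pathSup Φ σ := by
  obtain ⟨t⟩ := ‹Nonempty T›
  have h0 := (norm_nonneg _).trans (h t)
  have h1 := nonneg_of_mul_nonneg_right h0 (by positivity)
  have h2 : 0 ≤ K * (pathSup Φ σ - pathSup Φ τ) := by
    rw [← Real.one_le_exp_iff]; linarith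
  have h3 := nonneg_of_mul_nonneg_right h2 hK
  linarith

/-- Ekeland's principle for paths, with displacements weighted as in the Cerami condition: in a
closed class of paths on which the supremum of `Φ` is bounded below, there is a path with supremum
at most that of `σ₀` and with no path of strictly smaller supremum `PathBelow` it. -/
lemma exists_minimal_path [CompactSpace T] [Nonempty T] [CompleteSpace H]
    (hΦ : Continuous Φ) (hK : 0 < K) (P : Set C(T, H)) (hP : IsClosed P)
    (c : ℝ) (hc : ∀ σ ∈ P, c ≤ pathSup Φ σ) (σ₀ : C(T, H)) (hσ₀ : σ₀ ∈ P) :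
    ∃ σ ∈ P, pathSup Φ σ ≤ pathSup Φ σ₀ ∧
      ∀ τ ∈ P, PathBelow Φ K τ σ → pathSup Φ σ ≤ pathSup Φ τ := by
  -- Each step comes within `1 / (n + 1)` of the best possible value below the current path.
  have hnext : ∀ (n : ℕ) (σ : P), ∃ τ : P, PathBelow Φ K τ.1 σ.1 ∧
      ∀ ρ ∈ P, PathBelow Φ K ρ σ.1 → pathSup Φ τ.1 ≤ pathSup Φ ρ + 1 / ((n : ℝ) + 1) := by
    intro n σ
    set V : Set ℝ := pathSup Φ '' {ρ | ρ ∈ P ∧ PathBelow Φ K ρ σ.1} with hV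
    have hne : V.Nonempty := ⟨_, σ.1, ⟨σ.2, .rfl⟩, Eq.refl _⟩
    have hbb : BddBelow V := ⟨c, by rintro _ ⟨ρ, ⟨hρ, -⟩, rfl⟩; exact hc ρ hρ⟩
    have hn : (0 : ℝ) < 1 / ((n : ℝ) + 1) := by positivity
    obtain ⟨_, ⟨τ, ⟨hτP, hτ⟩, rfl⟩, hlt⟩ :=
      exists_lt_of_csInf_lt hne (lt_add_of_pos_right (sInf V) hn)
    refine ⟨⟨τ, hτP⟩, hτ, fun ρ hρP hρ => ?_⟩
    have := csInf_le hbb ⟨ρ, ⟨hρP, hρ⟩, Eq.refl _⟩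
    simp only
    linarith
  choose next hbelow hbest using hnext
  let s : ℕ → P := fun n => Nat.rec ⟨σ₀, hσ₀⟩ next n
  have hs : ∀ n, s (n + 1) = next n (s n) := fun n => Eq.refl _
  have hsb : ∀ n k, n ≤ k → PathBelow Φ K (s k).1 (s n).1 := by
    intro n k hnk
    induction k, hnk using Nat.le_induction with
    | base => exact .rfl
    | succ k _ ih => rw [hs]; exact (hbelow k (s k)).trans ih
  set F : ℕ → ℝ := fun n => pathSup Φ (s n).1 with hF
  have hanti : Antitone F := fun n k hnk => (hsb n k hnk).pathSup_le hK
  have hbb : BddBelow (range F) := ⟨c, by rintro _ ⟨n, rfl⟩; exact hc _ (s n).2⟩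
  set L : ℝ := ⨅ n, F n with hL
  have hFL : Tendsto F atTop (𝓝 L) := tendsto_atTop_ciInf hanti hbb
  have hLF : ∀ n, L ≤ F n := fun n => ciInf_le hbb n
  set A : ℝ := (1 + ‖σ₀‖) * Real.exp (K * (F 0 - L)) with hA
  have hweight : ∀ n t, 1 + ‖(s n).1 t‖ ≤ A := by
    intro n t
    refine ((hsb 0 n n.zero_le).weight_le t).trans ?_
    have h1 : ‖(s 0).1 t‖ ≤ ‖σ₀‖ := σ₀.norm_coe_le_norm t
    have h2 := hLF n
    simp only [hA, hF] at *
    gcongr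
  have hdisp : ∀ n k, n ≤ k → ∀ t, ‖(s k).1 t - (s n).1 t‖ ≤
      (1 + ‖(s n).1 t‖) * (Real.exp (K * (F n - L)) - 1) := by
    intro n k hnk t
    refine (hsb n k hnk t).trans ?_
    have := hLF k
    simp only [hF] at *
    gcongr
  have hA0 : 0 ≤ A := by positivity
  have hcau : CauchySeq fun n => (s n).1 := by
    refine cauchySeq_of_le_tendsto_0' (fun n => A * (Real.exp (K * (F n - L)) - 1)) ?_ ?_
    · intro n k hnk
      have h0 : 0 ≤ Real.exp (K * (F n - L)) - 1 := by
        have h1 : 0 ≤ K * (F n - L) := mul_nonneg hK.le (sub_nonneg.2 (hLF n))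
        linarith [Real.one_le_exp h1]
      rw [dist_comm, ContinuousMap.dist_le (mul_nonneg hA0 h0)]
      intro t
      rw [dist_eq_norm]
      exact (hdisp n k hnk t).trans (mul_le_mul_of_nonneg_right (hweight n t) h0)
    · have h1 : Tendsto (fun n => A * (Real.exp (K * (F n - L)) - 1)) atTop
          (𝓝 (A * (Real.exp (K * (L - L)) - 1))) :=
        (((Real.continuous_exp.tendsto _).comp ((hFL.sub_const L).const_mul K)).sub_const
          1).const_mul A
      simpa using h1
  obtain ⟨σ, hσ⟩ := cauchySeq_tendsto_of_complete hcau
  have hpt : ∀ t, Tendsto (fun n => (s n).1 t) atTop (𝓝 (σ t)) := fun t =>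
    ((ContinuousEvalConst.continuous_eval_const t).tendsto σ).comp hσ
  have hσP : σ ∈ P := hP.mem_of_tendsto hσ (Eventually.of_forall fun n => (s n).2)
  have hσL : pathSup Φ σ ≤ L := ciSup_le fun t =>
    le_of_tendsto_of_tendsto' ((hΦ.tendsto _).comp (hpt t)) hFL fun n => le_pathSup hΦ _ t
  have hσb : ∀ n, PathBelow Φ K σ (s n).1 := by
    intro n t
    refine (le_of_tendsto ((hpt t).sub_const _).norm
      ((eventually_ge_atTop n).mono fun k hk => hdisp n k hk t)).trans ?_
    simp only [hF]
    gcongr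
  refine ⟨σ, hσP, hσL.trans (hLF 0), fun τ hτP hτ => ?_⟩
  have hstep : ∀ n : ℕ, L ≤ pathSup Φ τ + 1 / ((n : ℝ) + 1) := by
    intro n
    have h1 := hbest n (s n) τ hτP (hτ.trans (hσb n))
    rw [← hs] at h1
    exact (hLF (n + 1)).trans h1
  have hlim : Tendsto (fun n : ℕ => pathSup Φ τ + 1 / ((n : ℝ) + 1)) atTop
      (𝓝 (pathSup Φ τ + 0)) := tendsto_one_div_add_atTop_nhds_zero_nat.const_add _
  rw [add_zero] at hlim
  exact hσL.trans (ge_of_tendsto' hlim hstep)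

end PathBelow

/-! ### Gradient descent and the mountain pass -/

/-- One step of weighted gradient descent along a path. If the weighted gradient
`(1 + ‖v‖) ‖g v‖` exceeds `ε` on the level band `|Φ - c| ≤ ε`, a path on
which `Φ ≤ M`, with `c ≤ M ≤ c + ε`, can be moved to one on which `Φ ≤ M - s ε / 4`, for some
`s > 0`, at the price of a relative displacement `s`. -/
lemma exists_lower_path {T H : Type*} [TopologicalSpace T] [CompactSpace T]
    [NormedAddCommGroup H] [InnerProductSpace ℝ H]
    (Φ : H → ℝ) (g : H → H) (hg : Continuous g)
    (hΦ : ∀ v, HasFDerivAt Φ (innerSL ℝ (g v)) v) (c ε M : ℝ) (hε : 0 < ε)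
    (hbig : ∀ v, |Φ v - c| ≤ ε → ε < (1 + ‖v‖) * ‖g v‖) (hcM : c ≤ M) (hMc : M ≤ c + ε)
    (σ : C(T, H)) (hσ : ∀ t, Φ (σ t) ≤ M) :
    ∃ (s : ℝ) (τ : C(T, H)), 0 < s ∧ (∀ t, Φ (σ t) ≤ c - ε → τ t = σ t) ∧
      (∀ t, ‖τ t - σ t‖ ≤ s * (1 + ‖σ t‖)) ∧ ∀ t, Φ (τ t) ≤ M - s * (ε / 4) := by
  have hΦc : Continuous Φ := continuous_iff_continuousAt.2 fun v => (hΦ v).continuousAt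
  -- The descent field is normalized to weighted length at most one, and cut off below level `c - ε`.
  set ψ : T → ℝ := fun t => max 0 (min 1 ((Φ (σ t) - c) / ε + 1)) with hψ
  set G : T → ℝ := fun t => (1 + ‖σ t‖) * ‖g (σ t)‖ with hG
  have hG0 : ∀ t, 0 ≤ G t := fun t => by positivity
  have hmaxpos : ∀ t, 0 < max (G t) ε := fun t => lt_max_of_lt_right hε
  set V : T → H := fun t => -((ψ t * (1 + ‖σ t‖) ^ 2 / max (G t) ε) • g (σ t)) with hV
  have hψc : Continuous ψ := by fun_prop
  have hGc : Continuous G := by fun_prop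
  have hVc : Continuous V := by
    have : Continuous fun t => ψ t * (1 + ‖σ t‖) ^ 2 / max (G t) ε :=
      Continuous.div (by fun_prop) (by fun_prop) fun t => (hmaxpos t).ne'
    fun_prop
  have hψ0 : ∀ t, 0 ≤ ψ t := fun t => le_max_left _ _
  have hψ1 : ∀ t, ψ t ≤ 1 := fun t => max_le zero_le_one (min_le_left _ _)
  have hVn : ∀ t, ‖V t‖ ≤ 1 + ‖σ t‖ := by
    intro t
    have h1 : ‖V t‖ = ψ t * (1 + ‖σ t‖) * (G t / max (G t) ε) := by
      have : 0 ≤ ψ t * (1 + ‖σ t‖) ^ 2 / max (G t) ε :=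
        div_nonneg (mul_nonneg (hψ0 t) (by positivity)) (hmaxpos t).le
      simp only [hV, norm_neg, norm_smul, Real.norm_eq_abs, abs_of_nonneg this]
      simp only [hG]
      ring
    have h2 : G t / max (G t) ε ≤ 1 := (div_le_one (hmaxpos t)).2 (le_max_left _ _)
    have h3 : 0 ≤ G t / max (G t) ε := div_nonneg (hG0 t) (hmaxpos t).le
    rw [h1]
    calc ψ t * (1 + ‖σ t‖) * (G t / max (G t) ε) ≤ 1 * (1 + ‖σ t‖) * 1 := by
          gcongr
          exact hψ1 t
      _ = 1 + ‖σ t‖ := by ring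
  have hinner : ∀ t, inner ℝ (g (σ t)) (V t) = -(ψ t * (G t * G t / max (G t) ε)) := by
    intro t
    simp only [hV, inner_neg_right, inner_smul_right, real_inner_self_eq_norm_sq]
    simp only [hG]
    ring
  have hinner0 : ∀ t, inner ℝ (g (σ t)) (V t) ≤ 0 := by
    intro t
    rw [hinner, neg_nonpos]
    exact mul_nonneg (hψ0 t) (div_nonneg (mul_self_nonneg _) (hmaxpos t).le)
  -- Compactness of `T` makes the first-order expansion of `Φ` along the field uniform.
  have hunif : ∀ᶠ s : ℝ in 𝓝 0, ∀ t ∈ (univ : Set T),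
      inner ℝ (g (σ t + s • V t)) (V t) < inner ℝ (g (σ t)) (V t) + ε / 2 := by
    refine isCompact_univ.eventually_forall_of_forall_eventually fun t _ => ?_
    have hl : Continuous fun z : ℝ × T =>
        (inner ℝ (g (σ z.2 + z.1 • V z.2)) (V z.2) : ℝ) := by fun_prop
    have hr : Continuous fun z : ℝ × T => (inner ℝ (g (σ z.2)) (V z.2) : ℝ) + ε / 2 := by fun_prop
    refine hl.continuousAt.eventually_lt hr.continuousAt ?_
    simp [hε]
  obtain ⟨δ, hδ, hδs⟩ := Metric.eventually_nhds_iff.1 hunif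
  obtain ⟨s, hs0, hs⟩ : ∃ s : ℝ, 0 < s ∧ s < min δ (1 / 3) :=
    exists_between (lt_min hδ (by norm_num))
  have hsδ : s < δ := hs.trans_le (min_le_left _ _)
  have hs3 : s < 1 / 3 := hs.trans_le (min_le_right _ _)
  have hexp : ∀ t, Φ (σ t + s • V t) ≤ Φ (σ t) + s * (inner ℝ (g (σ t)) (V t) + ε / 2) := by
    intro t
    have hd : ∀ x : ℝ, HasDerivAt (fun x : ℝ => Φ (σ t + x • V t))
        (inner ℝ (g (σ t + x • V t)) (V t)) x := by
      intro x
      have h1 : HasDerivAt (fun x : ℝ => σ t + x • V t) (V t) x := by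
        simpa using ((hasDerivAt_id x).smul_const (V t)).const_add (σ t)
      exact (hΦ (σ t + x • V t)).comp_hasDerivAt x h1
    obtain ⟨x, hx, hxe⟩ := exists_hasDerivAt_eq_slope (fun x : ℝ => Φ (σ t + x • V t)) _ hs0
      (fun x _ => (hd x).continuousAt.continuousWithinAt) (fun x _ => hd x)
    have h2 := hδs (y := x) (by
      rw [Real.dist_eq, sub_zero, abs_of_pos hx.1]; exact hx.2.trans hsδ) t (mem_univ t)
    rw [hxe, sub_zero, zero_smul, add_zero, div_lt_iff₀ hs0] at h2
    linarith
  refine ⟨s, ⟨fun t => σ t + s • V t, by fun_prop⟩, hs0, ?_, ?_, ?_⟩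
  · intro t ht
    have h1 : (Φ (σ t) - c) / ε + 1 ≤ 0 := by
      have : (Φ (σ t) - c) / ε ≤ -1 := by rw [div_le_iff₀ hε]; linarith
      linarith
    have h2 : ψ t = 0 := max_eq_left ((min_le_right _ _).trans h1)
    simp [hV, h2]
  · intro t
    simp only [ContinuousMap.coe_mk, add_sub_cancel_left, norm_smul, Real.norm_eq_abs,
      abs_of_pos hs0]
    exact mul_le_mul_of_nonneg_left (hVn t) hs0.le
  · intro t
    simp only [ContinuousMap.coe_mk]
    have h1 := hexp t
    have h2 := hσ t
    rcases le_total (Φ (σ t)) (c - ε / 4) with h | h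
    · nlinarith [hinner0 t]
    · have h3 : 3 / 4 ≤ ψ t := by
        refine le_max_of_le_right (le_min (by norm_num) ?_)
        have : -(1 / 4) ≤ (Φ (σ t) - c) / ε := by rw [le_div_iff₀ hε]; linarith
        linarith
      have h4 : ε < G t := hbig _ (abs_le.2 ⟨by linarith, by linarith⟩)
      have h5 : inner ℝ (g (σ t)) (V t) ≤ -(3 / 4 * ε) := by
        rw [hinner, max_eq_left h4.le, mul_self_div_self]
        nlinarith
      nlinarith

/-- Quantitative mountain pass principle with the Cerami weight: a path within `ε` of the minimax
level `c` forces a point near level `c` where the weighted gradient is at most `ε`. -/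
lemma exists_almost_critical {H : Type*}
    [NormedAddCommGroup H] [InnerProductSpace ℝ H] [CompleteSpace H]
    (Φ : H → ℝ) (g : H → H) (hg : Continuous g)
    (hΦ : ∀ v, HasFDerivAt Φ (innerSL ℝ (g v)) v) (c ε : ℝ) (hε : 0 < ε) (e : H)
    (h0 : Φ 0 ≤ c - ε) (he : Φ e ≤ c - ε)
    (hc : ∀ σ : C(unitInterval, H), σ 0 = 0 → σ 1 = e → c ≤ pathSup Φ σ)
    (σ₀ : C(unitInterval, H)) (hσ0 : σ₀ 0 = 0) (hσ1 : σ₀ 1 = e) (hσ : pathSup Φ σ₀ ≤ c + ε) :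
    ∃ v, |Φ v - c| ≤ ε ∧ (1 + ‖v‖) * ‖g v‖ ≤ ε := by
  by_contra! hbig
  have hΦc : Continuous Φ := continuous_iff_continuousAt.2 fun v => (hΦ v).continuousAt
  have hPc : IsClosed {σ : C(unitInterval, H) | σ 0 = 0 ∧ σ 1 = e} :=
    (isClosed_eq (ContinuousEvalConst.continuous_eval_const _) continuous_const).inter
      (isClosed_eq (ContinuousEvalConst.continuous_eval_const _) continuous_const)
  obtain ⟨σ, ⟨hs0, hs1⟩, hsup, hmin⟩ := exists_minimal_path (K := 4 / ε) hΦc (by positivity) _ hPc c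
    (fun σ h => hc σ h.1 h.2) σ₀ ⟨hσ0, hσ1⟩
  obtain ⟨s, τ, hs, hfix, hdisp, hlow⟩ := exists_lower_path Φ g hg hΦ c ε (pathSup Φ σ) hε hbig
    (hc σ hs0 hs1) (hsup.trans hσ) σ (le_pathSup hΦc σ)
  have hτ : pathSup Φ τ ≤ pathSup Φ σ - s * (ε / 4) := ciSup_le hlow
  have hlt : 0 < s * (ε / 4) := by positivity
  refine absurd (hmin τ ⟨?_, ?_⟩ fun t => ?_) (not_le.2 (by linarith))
  · rw [hfix 0 (by rwa [hs0]), hs0]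
  · rw [hfix 1 (by rwa [hs1]), hs1]
  · refine (hdisp t).trans ?_
    rw [mul_comm]
    refine mul_le_mul_of_nonneg_left ?_ (by positivity)
    -- `1 + s ≤ exp s`, and `K = 4 / ε` converts the drop `s ε / 4` into `s`.
    have h1 : s ≤ 4 / ε * (pathSup Φ σ - pathSup Φ τ) := by
      rw [div_mul_eq_mul_div, le_div_iff₀ hε]; linarith
    linarith [Real.add_one_le_exp (4 / ε * (pathSup Φ σ - pathSup Φ τ))]

/-! ### The Cerami sequence -/

/-- Theorem `ThLink1 (a)`: existence of a Cerami sequence at the mountain-pass level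
`c_M` for the reduced functional.  The space `X = X⁺ ⊕ X̃` with `‖u‖² = ‖u⁺‖² + ‖ũ‖²`
is modelled as the product `H × W` of the Hilbert space `H = X⁺` and the reflexive
Banach space `W = X̃`, with norm `nrm (v, w) = √(‖v‖² + ‖w‖²)`; the topology `𝒯` is
norm convergence in `H` together with weak convergence in `W`.  Under (I1)–(I7),
`c_M ≥ a > 0` and there is a sequence `(v_n) ⊂ X⁺` with `J(m(v_n)) → c_M` and
`(1 + ‖v_n‖) · sup{|J'(m(v_n))[φ]| : φ ∈ X⁺, ‖φ‖ ≤ 1} → 0`. -/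
theorem cerami_sequence_at_cM
    {H W : Type*} [NormedAddCommGroup H] [InnerProductSpace ℝ H] [CompleteSpace H]
    [NormedAddCommGroup W] [NormedSpace ℝ W] [CompleteSpace W]
    -- `W` is reflexive
    (hrefl : Function.Surjective ⇑(NormedSpace.inclusionInDoubleDual ℝ W))
    (I : H × W → ℝ) (hI : ContDiff ℝ 1 I)
    (J : H × W → ℝ) (hJ : ∀ u, J u = (1/2) * ‖u.1‖ ^ 2 - I u)
    (nrm : H × W → ℝ) (hnrm : ∀ u, nrm u = Real.sqrt (‖u.1‖ ^ 2 + ‖u.2‖ ^ 2))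
    (Mset : Set (H × W)) (hMset : Mset = {u | ∀ w : W, fderiv ℝ I u (0, w) = 0})
    -- (I1)
    (hI1 : I 0 = 0 ∧ ∀ u, 0 ≤ I u)
    -- (I2): 𝒯-sequential lower semicontinuity
    (hI2 : ∀ (u : ℕ → H × W) (u₀ : H × W),
      Tendsto (fun n => (u n).1) atTop (𝓝 u₀.1) →
      (∀ f : W →L[ℝ] ℝ, Tendsto (fun n => f (u n).2) atTop (𝓝 (f u₀.2))) →
      I u₀ ≤ liminf (fun n => I (u n)) atTop)
    -- (I3)
    (hI3 : ∀ (u : ℕ → H × W) (u₀ : H × W),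
      Tendsto (fun n => (u n).1) atTop (𝓝 u₀.1) →
      (∀ f : W →L[ℝ] ℝ, Tendsto (fun n => f (u n).2) atTop (𝓝 (f u₀.2))) →
      Tendsto (fun n => I (u n)) atTop (𝓝 (I u₀)) →
      Tendsto u atTop (𝓝 u₀))
    -- (I4): `‖u⁺‖ + I(u) → ∞` as `‖u‖ → ∞`
    (hI4 : ∀ u : ℕ → H × W, Tendsto (fun n => nrm (u n)) atTop atTop →
      Tendsto (fun n => ‖(u n).1‖ + I (u n)) atTop atTop)
    -- (I5)
    (hI5 : ∀ u ∈ Mset, ∀ w : W, w ≠ 0 → I u < I (u.1, u.2 + w))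
    (r a : ℝ) (hr : 0 < r)
    -- (I6)
    (ha : a = sInf {y | ∃ v : H, ‖v‖ = r ∧ y = J (v, 0)}) (hI6 : 0 < a)
    -- (I7)
    (hI7 : ∀ (t : ℕ → ℝ) (u : ℕ → H × W) (v : H), Tendsto t atTop atTop →
      Tendsto (fun n => (u n).1) atTop (𝓝 v) → v ≠ 0 →
      Tendsto (fun n => I (t n • u n) / (t n) ^ 2) atTop atTop)
    -- the reduction map `m : X⁺ → M`, `m(v)` being the unique point of `M` over `v`
    (m : H → H × W)
    (hm : ∀ v : H, (m v).1 = v ∧ m v ∈ Mset ∧ ∀ u ∈ Mset, u.1 = v → u = m v)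
    -- the mountain-pass level over paths in `M`
    (cM : ℝ)
    (hcM : cM = sInf {c | ∃ γ : ℝ → H × W, ContinuousOn γ (Icc 0 1) ∧
      (∀ s ∈ Icc (0:ℝ) 1, γ s ∈ Mset) ∧ γ 0 = 0 ∧ r < ‖(γ 1).1‖ ∧ J (γ 1) < 0 ∧
      c = sSup (J '' (γ '' Icc (0:ℝ) 1))}) :
    0 < a ∧ a ≤ cM ∧
    ∃ v : ℕ → H,
      Tendsto (fun n => J (m (v n))) atTop (𝓝 cM) ∧
      Tendsto (fun n => (1 + ‖v n‖) *
          sSup {y | ∃ φ : H, ‖φ‖ ≤ 1 ∧ y = |fderiv ℝ J (m (v n)) (φ, 0)|})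
        atTop (𝓝 0) := by
  have hM : ∀ u, u ∈ Mset ↔ ∀ w : W, fderiv ℝ I u (0, w) = 0 := fun u => by rw [hMset]; rfl
  have hm1 : ∀ v, (m v).1 = v := fun v => (hm v).1
  have hmin : ∀ v w, w ≠ (m v).2 → I (m v) < I (v, w) := by
    intro v w hw
    have h := hI5 (m v) (hm v).2.1 (w - (m v).2) (sub_ne_zero.2 hw)
    rwa [hm1, add_sub_cancel] at h
  have hmin' : ∀ v w, I (m v) ≤ I (v, w) := by
    intro v w
    by_cases h : w = (m v).2
    · have : m v = (v, w) := Prod.ext (hm1 v) h.symm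
      rw [this]
    · exact (hmin v w h).le
  have hmc : Continuous m := continuous_reduction hrefl I hI.continuous hI1.2 nrm hnrm hI2 hI3 hI4
    m hm1 hmin
  have hJ1 : ContDiff ℝ 1 J := by
    have : J = fun u => (1 / 2) * ‖u.1‖ ^ 2 - I u := funext hJ
    rw [this]
    exact (contDiff_const.mul (contDiff_fst.norm_sq ℝ)).sub hI
  have hmax : ∀ v w, J (v, w) ≤ J (m v) := by
    intro v w
    rw [hJ, hJ, hm1]
    linarith [hmin' v w]
  set Φ : H → ℝ := fun v => J (m v) with hΦdef
  set g : H → H := fun v => (InnerProductSpace.toDual ℝ H).symm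
    ((fderiv ℝ J (m v)).comp (ContinuousLinearMap.inl ℝ H W)) with hgdef
  have hinner : ∀ v φ, inner ℝ (g v) φ = fderiv ℝ J (m v) (φ, 0) := by
    intro v φ
    simp only [hgdef, InnerProductSpace.toDual_symm_apply]
    simp
  have hg : Continuous g := by
    have h1 : Continuous fun v => fderiv ℝ J (m v) := (hJ1.continuous_fderiv one_ne_zero).comp hmc
    exact (InnerProductSpace.toDual ℝ H).symm.continuous.comp (h1.clm_comp continuous_const)
  have hΦ : ∀ v, HasFDerivAt Φ (innerSL ℝ (g v)) v := by
    intro v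
    have h1 := hasFDerivAt_reduced J hJ1 m hmc hm1 hmax v
    have h2 : innerSL ℝ (g v) = (fderiv ℝ J (m v)).comp (ContinuousLinearMap.inl ℝ H W) := by
      ext φ
      simpa using hinner v φ
    rw [h2]
    exact h1
  have hΦc : Continuous Φ := hJ1.continuous.comp hmc
  -- The origin is a global minimizer of `I`, hence a point of `M`.
  have hm0 : m 0 = 0 := by
    refine ((hm 0).2.2 0 ((hM 0).2 fun w => ?_) rfl).symm
    have : IsLocalMin I 0 := Eventually.of_forall fun u => by rw [hI1.1]; exact hI1.2 u
    rw [this.fderiv_eq_zero]; rfl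
  have hΦ0 : Φ 0 = 0 := by simp [hΦdef, hm0, hJ, hI1.1]
  -- A nonzero infimum excludes the junk values of `sInf`: the sphere is nonempty and `J` is bounded
  -- below on it.
  set S : Set ℝ := {y | ∃ v : H, ‖v‖ = r ∧ y = J (v, 0)} with hS
  have hSne : S.Nonempty := by
    by_contra h
    rw [not_nonempty_iff_eq_empty] at h
    rw [ha, h, Real.sInf_empty] at hI6
    exact lt_irrefl _ hI6
  have hSbb : BddBelow S := by
    by_contra h
    rw [ha, Real.sInf_of_not_bddBelow h] at hI6
    exact lt_irrefl _ hI6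
  have hsphere : ∀ v, ‖v‖ = r → a ≤ Φ v := by
    intro v hv
    have h1 : sInf S ≤ J (v, 0) := csInf_le hSbb ⟨v, hv, rfl⟩
    rw [ha]
    exact h1.trans (hmax v 0)
  have hcross : ∀ σ : C(unitInterval, H), σ 0 = 0 → r < ‖σ 1‖ → a ≤ pathSup Φ σ := by
    intro σ h0 h1
    obtain ⟨t, ht⟩ : r ∈ range fun t => ‖σ t‖ := by
      refine mem_range_of_exists_le_of_exists_ge σ.continuous.norm ⟨0, ?_⟩ ⟨1, h1.le⟩
      rw [h0, norm_zero]; exact hr.le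
    exact (hsphere _ ht).trans (le_pathSup hΦc σ t)
  -- Paths in `M` correspond to paths in `H` through the first component.
  set Γ : Set ℝ := {c | ∃ σ : C(unitInterval, H), σ 0 = 0 ∧ r < ‖σ 1‖ ∧ Φ (σ 1) < 0 ∧
    c = pathSup Φ σ} with hΓ
  have hcM' : cM = sInf Γ := by
    rw [hcM]
    congr 1
    ext c
    constructor
    · rintro ⟨γ, hγc, hγM, hγ0, hγ1, hγJ, rfl⟩
      have hγm : ∀ s ∈ Icc (0 : ℝ) 1, m (γ s).1 = γ s := fun s hs =>
        ((hm (γ s).1).2.2 (γ s) (hγM s hs) rfl).symm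
      refine ⟨⟨fun t => (γ t).1, continuous_fst.comp (continuousOn_iff_continuous_domRestrict.1 hγc)⟩,
        ?_, ?_, ?_, ?_⟩
      · simp [hγ0]
      · simpa using hγ1
      · have := hγm 1 (by simp)
        simpa [hΦdef, this] using hγJ
      · rw [image_image, sSup_image']
        refine iSup_congr fun t => ?_
        simp only [ContinuousMap.coe_mk, hΦdef, hγm t t.2]
    · rintro ⟨σ, h0, h1, hneg, rfl⟩
      have hproj1 : projIcc (0 : ℝ) 1 zero_le_one 1 = 1 := projIcc_right _
      have hproj0 : projIcc (0 : ℝ) 1 zero_le_one 0 = 0 := projIcc_left _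
      refine ⟨fun s => m (σ (projIcc 0 1 zero_le_one s)),
        (hmc.comp (σ.continuous.comp continuous_projIcc)).continuousOn, fun s _ => (hm _).2.1,
        ?_, ?_, ?_, ?_⟩
      · simp only [hproj0, h0, hm0]
      · simpa only [hproj1, hm1] using h1
      · simpa only [hproj1] using hneg
      · rw [image_image, sSup_image']
        refine iSup_congr fun t => ?_
        rw [projIcc_val]
  have hΓa : ∀ c ∈ Γ, a ≤ c := by
    rintro _ ⟨σ, h0, h1, -, rfl⟩
    exact hcross σ h0 h1
  have hΓbb : BddBelow Γ := ⟨a, hΓa⟩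
  have hΓne : Γ.Nonempty := by
    obtain ⟨_, v, hv, -⟩ := hSne
    have hv0 : v ≠ 0 := by
      rintro rfl
      rw [norm_zero] at hv
      exact hr.ne hv
    set t : ℕ → ℝ := fun n => (n : ℝ) + 2 with ht
    have htpos : ∀ n, 0 < t n := fun n => by positivity
    have htt : Tendsto t atTop atTop :=
      tendsto_atTop_add_const_right _ _ tendsto_natCast_atTop_atTop
    have hI7' := hI7 t (fun n => (t n)⁻¹ • m (t n • v)) v htt (by
      simp only [Prod.smul_fst, hm1]
      refine tendsto_const_nhds.congr fun n => ?_
      rw [inv_smul_smul₀ (htpos n).ne']) hv0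
    obtain ⟨n, hn⟩ := (hI7'.eventually_gt_atTop ((1 / 2) * r ^ 2)).exists
    rw [smul_inv_smul₀ (htpos n).ne', lt_div_iff₀ (pow_pos (htpos n) 2)] at hn
    have hnorm : ‖t n • v‖ = t n * r := by
      rw [norm_smul, Real.norm_eq_abs, abs_of_pos (htpos n), hv]
    refine ⟨_, ⟨fun s : unitInterval => (s : ℝ) • (t n • v), by fun_prop⟩, ?_, ?_, ?_, rfl⟩
    · simp
    · have h2 : (2 : ℝ) ≤ t n := by simp [ht]
      simp only [ContinuousMap.coe_mk, Icc.coe_one, one_smul, hnorm]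
      nlinarith
    · simp only [ContinuousMap.coe_mk, Icc.coe_one, one_smul, hΦdef, hJ, hm1, hnorm]
      nlinarith
  have hac : a ≤ cM := by
    rw [hcM']
    exact le_csInf hΓne hΓa
  refine ⟨hI6, hac, ?_⟩
  have halmost : ∀ ε : ℝ, 0 < ε → ε ≤ a → ∃ v, |Φ v - cM| ≤ ε ∧ (1 + ‖v‖) * ‖g v‖ ≤ ε := by
    intro ε hε hεa
    obtain ⟨_, ⟨σ, h0, h1, hneg, rfl⟩, hlt⟩ :=
      exists_lt_of_csInf_lt hΓne (lt_add_of_pos_right (sInf Γ) hε)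
    rw [← hcM'] at hlt
    refine exists_almost_critical Φ g hg hΦ cM ε hε (σ 1) (by rw [hΦ0]; linarith) (by linarith)
      (fun τ hτ0 hτ1 => ?_) σ h0 rfl hlt.le
    rw [hcM']
    exact csInf_le hΓbb ⟨τ, hτ0, by rwa [hτ1], by rwa [hτ1], rfl⟩
  have hδ : ∀ n : ℕ, 0 < min (1 / ((n : ℝ) + 1)) a := fun n => lt_min (by positivity) hI6
  choose v hv1 hv2 using fun n : ℕ => halmost _ (hδ n) (min_le_right _ _)
  have hzero : Tendsto (fun n : ℕ => 1 / ((n : ℝ) + 1)) atTop (𝓝 0) :=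
    tendsto_one_div_add_atTop_nhds_zero_nat
  refine ⟨v, ?_, ?_⟩
  · rw [tendsto_iff_dist_tendsto_zero]
    exact squeeze_zero (fun n => dist_nonneg) (fun n => (hv1 n).trans (min_le_left _ _)) hzero
  · have hdual : ∀ u, sSup {y | ∃ φ : H, ‖φ‖ ≤ 1 ∧ y = |fderiv ℝ J (m u) (φ, 0)|} ≤ ‖g u‖ := by
      intro u
      refine Real.sSup_le ?_ (norm_nonneg _)
      rintro _ ⟨φ, hφ, rfl⟩
      rw [← hinner]
      exact (abs_real_inner_le_norm _ _).trans (mul_le_of_le_one_right (norm_nonneg _) hφ)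
    have hdual0 : ∀ u, 0 ≤ sSup {y | ∃ φ : H, ‖φ‖ ≤ 1 ∧ y = |fderiv ℝ J (m u) (φ, 0)|} := by
      intro u
      refine Real.sSup_nonneg ?_
      rintro _ ⟨φ, -, rfl⟩
      exact abs_nonneg _
    refine squeeze_zero (fun n => mul_nonneg (by positivity) (hdual0 _)) (fun n => ?_) hzero
    exact (mul_le_mul_of_nonneg_left (hdual _) (by positivity)).trans
      ((hv2 n).trans (min_le_left _ _))
end
end

section
/- Suppose I satisfies (I1)–(I8), dim X⁺ = ∞, J is even, G acts on X as in (G), and the Cerami-type condition (M)_0^β holds for every β > 0. Then J has infinitely many geometrically distinct critical orbits: there is a sequence (u_n) of critical points of J such that (G∗u_n) ∩ (G∗u_m) = ∅ whenever n ≠ m, where G∗u := {gu : g ∈ G}. -/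
/-!
Minimizing `I` over the fibres `v + X̃` reduces the problem to the even functional `Φ = J ∘ m` on
the Hilbert space `X⁺`: the minimizer `m v` depends continuously on `v` (`continuous_minimizer`,
using weak compactness in the reflexive space `X̃`), an envelope argument shows that `Φ` is `C¹` with
gradient read off from `J'(m v)` (`hasFDerivAt_minimum`), and a zero `v` of the gradient yields
a critical point `m v` of `J`.

Suppose that `J` has only finitely many critical orbits. Since the group acts by isometries that
preserve `J`, the critical set of `Φ` is bounded and there are only finitely many critical values,
say `L` of them at or above the mountain pass level `a`. The Cerami-type condition then says that
almost critical points cluster: two of them at distance less than `mb` are in fact close to each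
other (`exists_clustersAt`).

The deformation argument uses a continuous odd discrete descent map `T` (`descentStep`) instead of
a flow. By clustering, moving a fixed distance inside a region of bounded norm costs a definite
amount of `Φ`. Hence a trajectory that never falls below `a` converges to a critical point
(`IsDescent.cauchySeq`), and a trajectory can approach at most one critical point of a given level
while staying near that level (`IsDescent.visit_unique`). A trajectory falling below `a` stays on one
side of the sphere of radius `r`.

Let `F` be the span of `L + 1` orthonormal vectors. On `F`, let `χ` record whether a trajectory falls
below `a` inside the sphere; it is even, `1` near the origin and `0` far away. For each critical
level, let `s i` be a sign chosen oddly for the critical point that is visited at this level. Near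
each point of `F` one of these `L + 1` two-valued functions is constant. This is impossible by a
Lusternik–Schnirelmann type theorem (`no_symmetric_cover`), which is proved with explicit mod 2
cochains on tuples of points: the cup product of the coboundaries of `χ` and all `s i` vanishes
on fine tuples, but an induction over the dimension evaluates it to `1` on half of a symmetric
cube (`half_cobd`).
-/

open MeasureTheory Filter Real Set
open scoped RealInnerProductSpace ENNReal Topology

noncomputable section

namespace CritOrbits

/-! ### Cochains on ordered tuples -/

section Cochains

variable {V : Type*}

/-- The coboundary of a `ZMod 2`-valued function on tuples (lists) of points: `cobd f l` is the
sum of `f` over all lists obtained from `l` by omitting one entry. -/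
def cobd : (List V → ZMod 2) → List V → ZMod 2
  | _, [] => 0
  | f, v :: l => f l + cobd (fun t => f (v :: t)) l

lemma cobd_add (f g : List V → ZMod 2) (l : List V) :
    cobd (fun t => f t + g t) l = cobd f l + cobd g l := by
  induction l generalizing f g with
  | nil => simp [cobd]
  | cons v l ih => simp only [cobd, ih]; ring

lemma cobd_zero (l : List V) : cobd (fun _ => 0) l = 0 := by
  induction l with
  | nil => simp [cobd]
  | cons v l ih => simp only [cobd, ih]; ring

lemma cobd_mul (c : ZMod 2) (f : List V → ZMod 2) (l : List V) :
    cobd (fun t => c * f t) l = c * cobd f l := by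
  induction l generalizing f with
  | nil => simp [cobd]
  | cons v l ih => simp only [cobd, ih]; ring

lemma cobd_cobd (f : List V → ZMod 2) (l : List V) : cobd (cobd f) l = 0 := by
  induction l generalizing f with
  | nil => simp [cobd]
  | cons v l ih =>
    simp only [cobd, cobd_add, ih, add_zero]
    exact CharTwo.add_self_eq_zero _

lemma cobd_map (φ : V → V) (f : List V → ZMod 2) (l : List V) :
    cobd (fun t => f (t.map φ)) l = cobd f (l.map φ) := by
  induction l generalizing f with
  | nil => simp [cobd]
  | cons v l ih =>
    simp only [cobd, List.map_cons]
    rw [ih (fun t => f (φ v :: t))]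

/-- The dual of the prism operator for the translation by `e`: the sum of `f` over the tuples
`(v₀, …, vᵢ, vᵢ + e, …, vₖ + e)`. -/
def prism [Add V] (e : V) : (List V → ZMod 2) → List V → ZMod 2
  | _, [] => 0
  | f, v :: l => f (v :: (v + e) :: l.map (· + e)) + prism e (fun t => f (v :: t)) l

lemma prism_add [Add V] (e : V) (f g : List V → ZMod 2) (l : List V) :
    prism e (fun t => f t + g t) l = prism e f l + prism e g l := by
  induction l generalizing f g with
  | nil => simp [prism]
  | cons v l ih => simp only [prism, ih]; ring

lemma prism_congr [Add V] (e : V) (f g : List V → ZMod 2) (l : List V)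
    (h : ∀ t : List V, (∀ y ∈ t, ∃ x ∈ l, y = x ∨ y = x + e) → f t = g t) :
    prism e f l = prism e g l := by
  induction l generalizing f g with
  | nil => simp [prism]
  | cons v l ih =>
    simp only [prism]
    congr 1
    · apply h
      intro y hy
      simp only [List.mem_cons, List.mem_map] at hy
      rcases hy with rfl | rfl | ⟨x, hx, rfl⟩
      · exact ⟨y, by simp, Or.inl rfl⟩
      · exact ⟨v, by simp, Or.inr rfl⟩
      · exact ⟨x, by simp [hx], Or.inr rfl⟩
    · apply ih
      intro t ht
      apply h
      intro y hy
      rcases List.mem_cons.1 hy with rfl | hy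
      · exact ⟨y, by simp, Or.inl rfl⟩
      · obtain ⟨x, hx, hxy⟩ := ht y hy
        exact ⟨x, by simp [hx], hxy⟩

lemma prism_zero [Add V] (e : V) (l : List V) : prism e (fun _ => 0) l = 0 := by
  induction l with
  | nil => simp [prism]
  | cons v l ih => simp only [prism, ih]; ring

/-- The prism identity `∂P + P∂ = T_e + 1`, in dual form. -/
lemma prism_cobd [Add V] (e : V) (f : List V → ZMod 2) (l : List V) :
    prism e (cobd f) l = f (l.map (· + e)) + f l + cobd (prism e f) l := by
  induction l generalizing f with
  | nil => simp [prism, cobd]; exact (CharTwo.add_self_eq_zero _).symm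
  | cons v l ih =>
    simp only [prism, cobd, prism_add, cobd_add, ih, List.map_cons]
    rw [cobd_map (· + e) (fun s => f (v :: (v + e) :: s)) l]
    generalize f (v :: l.map (· + e)) = A
    generalize f ((v + e) :: l.map (· + e)) = B
    generalize cobd (fun t => f (v :: (v + e) :: t)) (l.map (· + e)) = C
    generalize prism e f l = D
    generalize cobd (prism e fun s => f (v :: s)) l = E
    generalize f (v :: l) = F
    have := CharTwo.add_self_eq_zero A
    linear_combination this

/-- The cup product `δf₁ ∪ ⋯ ∪ δfₖ` of coboundaries of `ZMod 2`-valued functions. -/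
def cup : List (V → ZMod 2) → List V → ZMod 2
  | [], [_] => 1
  | f :: fs, a :: b :: l => (f a + f b) * cup fs (b :: l)
  | _, _ => 0

/-- The cup product `f ∪ δf₁ ∪ ⋯ ∪ δfₖ`. -/
def cupHead (f : V → ZMod 2) (fs : List (V → ZMod 2)) : List V → ZMod 2
  | [] => 0
  | a :: l => f a * cup fs (a :: l)

lemma cobd_cupHead_of (f : V → ZMod 2) (fs : List (V → ZMod 2))
    (h : ∀ l, cobd (cup fs) l = 0) (l : List V) :
    cobd (cupHead f fs) l = cup (f :: fs) l := by
  match l with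
  | [] => simp [cobd, cup]
  | [a] => simp [cobd, cup, cupHead]
  | a :: b :: t =>
    have h1 := h (a :: b :: t)
    have e1 : cobd (cupHead f fs) (a :: b :: t)
        = cupHead f fs (b :: t) + cobd (fun s => cupHead f fs (a :: s)) (b :: t) := by
      rw [cobd]
    have e2 : cobd (cup fs) (a :: b :: t)
        = cup fs (b :: t) + cobd (fun s => cup fs (a :: s)) (b :: t) := by
      rw [cobd]
    have e3 : (fun s => cupHead f fs (a :: s)) = fun s => f a * cup fs (a :: s) := by
      funext s; simp [cupHead]
    rw [e2] at h1
    have e4 : cup (f :: fs) (a :: b :: t) = (f a + f b) * cup fs (b :: t) := by rw [cup]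
    rw [e1, e3, cobd_mul, e4, cupHead]
    have h3 := CharTwo.add_self_eq_zero (f a * cup fs (b :: t))
    linear_combination f a * h1 - h3

lemma cobd_cup (fs : List (V → ZMod 2)) (l : List V) : cobd (cup fs) l = 0 := by
  induction fs generalizing l with
  | nil =>
    match l with
    | [] => simp [cobd]
    | [a] => simp [cobd, cup]
    | [a, b] => simp [cobd, cup]; decide
    | a :: b :: c :: t =>
      simp [cobd, cup, cobd_zero]
  | cons f fs ih =>
    have : cup (f :: fs) = cobd (cupHead f fs) := by
      funext l; rw [cobd_cupHead_of f fs ih]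
    rw [this, cobd_cobd]

lemma cobd_cupHead (f : V → ZMod 2) (fs : List (V → ZMod 2)) (l : List V) :
    cobd (cupHead f fs) l = cup (f :: fs) l :=
  cobd_cupHead_of f fs (cobd_cup fs) l

/-- The cup product vanishes on a tuple on which one of the functions is constant. -/
lemma cup_eq_zero (fs : List (V → ZMod 2)) (l : List V) (f : V → ZMod 2) (hf : f ∈ fs)
    (h : ∀ x ∈ l, ∀ y ∈ l, f x = f y) : cup fs l = 0 := by
  induction fs generalizing l with
  | nil => simp at hf
  | cons f' fs ih =>
    match l with
    | [] => simp [cup]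
    | [a] => simp [cup]
    | a :: b :: t =>
      rw [cup]
      rcases List.mem_cons.1 hf with rfl | hf
      · rw [h a (by simp) b (by simp), CharTwo.add_self_eq_zero, zero_mul]
      · rw [ih (b :: t) hf (fun x hx y hy => h x (by simp [List.mem_cons.1 hx])
          y (by simp [List.mem_cons.1 hy])), mul_zero]

lemma cup_map (φ : V → V) (fs : List (V → ZMod 2)) (l : List V)
    (h : ∀ f ∈ fs, ∀ x ∈ l, ∀ y ∈ l, f (φ x) + f (φ y) = f x + f y) :
    cup fs (l.map φ) = cup fs l := by
  induction fs generalizing l with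
  | nil =>
    match l with
    | [] => simp [cup]
    | [a] => simp [cup]
    | a :: b :: t => simp [cup]
  | cons f' fs ih =>
    match l with
    | [] => simp
    | [a] => simp [cup]
    | a :: b :: t =>
      have := ih (b :: t) (fun f hf x hx y hy => h f (by simp [hf]) x
        (by simp [List.mem_cons.1 hx]) y (by simp [List.mem_cons.1 hy]))
      simp only [List.map_cons] at this ⊢
      rw [cup, cup, this, h f' (by simp) a (by simp) b (by simp)]

end Cochains

/-! ### A chain of antipodal hemispheres -/

section Chains

variable {V : Type*} [AddCommGroup V]

/-- The sum of the prism operators over `n` consecutive translates by `e`; on tuples it is dual to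
the product with the segment from `0` to `n • e`, subdivided into `n` pieces. -/
def sweep (e : V) (n : ℕ) (f : List V → ZMod 2) (l : List V) : ZMod 2 :=
  ∑ j ∈ Finset.range n, prism e f (l.map (· + j • e))

lemma sweep_cobd (e : V) (n : ℕ) (f : List V → ZMod 2) (l : List V) :
    sweep e n (cobd f) l = f (l.map (· + n • e)) + f l + cobd (sweep e n f) l := by
  induction n with
  | zero =>
    have : sweep e 0 f = fun _ => 0 := by funext t; simp [sweep]
    rw [this, cobd_zero]
    simp [sweep, CharTwo.add_self_eq_zero]
  | succ n ih =>
    have h1 : sweep e (n + 1) f = fun t => sweep e n f t + prism e f (t.map (· + n • e)) := by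
      funext t; simp [sweep, Finset.sum_range_succ]
    have h2 : sweep e (n + 1) (cobd f) l
        = sweep e n (cobd f) l + prism e (cobd f) (l.map (· + n • e)) := by
      simp [sweep, Finset.sum_range_succ]
    have h3 : (l.map (· + n • e)).map (· + e) = l.map (· + (n + 1) • e) := by
      rw [List.map_map]
      apply List.map_congr_left
      intro x _
      simp only [Function.comp, succ_nsmul]; abel
    rw [h2, h1, cobd_add, ih, prism_cobd, h3, cobd_map (· + n • e) (prism e f) l]
    have := CharTwo.add_self_eq_zero (f (l.map (· + n • e)))
    linear_combination this

lemma sweep_add (e : V) (n : ℕ) (f g : List V → ZMod 2) (l : List V) :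
    sweep e n (fun t => f t + g t) l = sweep e n f l + sweep e n g l := by
  simp [sweep, prism_add, Finset.sum_add_distrib]

lemma sweep_congr (e : V) (n : ℕ) (f g : List V → ZMod 2) (l : List V)
    (h : ∀ t : List V, (∃ j < n, ∀ y ∈ t, ∃ x ∈ l, y = x + j • e ∨ y = x + (j + 1) • e) →
      f t = g t) :
    sweep e n f l = sweep e n g l := by
  apply Finset.sum_congr rfl
  intro j hj
  apply prism_congr
  intro t ht
  apply h t ⟨j, Finset.mem_range.1 hj, _⟩
  intro y hy
  obtain ⟨x', hx', hxy⟩ := ht y hy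
  obtain ⟨x, hx, rfl⟩ := List.mem_map.1 hx'
  refine ⟨x, hx, ?_⟩
  rcases hxy with rfl | rfl
  · exact Or.inl rfl
  · right; rw [succ_nsmul]; abel

lemma sweep_zero (e : V) (n : ℕ) (l : List V) : sweep e n (fun _ => 0) l = 0 := by
  simp [sweep, prism_zero]

/-- Summation of a cochain over a symmetric `k`-dimensional chain filling a large cube centred at
the origin in the directions `d 0, …, d (k - 1)`. The `(k + 1)`-dimensional chain is the union of
the half obtained by sweeping the `k`-dimensional one in the direction `d k` and its antipode. -/
def chain (d : ℕ → V) (n : ℕ) : ℕ → (List V → ZMod 2) → ZMod 2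
  | 0, f => f [0]
  | k + 1, f => chain d n k (sweep (d k) n f)
      + chain d n k (sweep (d k) n (fun l => f (l.map (- ·))))

lemma chain_add (d : ℕ → V) (n k : ℕ) (f g : List V → ZMod 2) :
    chain d n k (fun t => f t + g t) = chain d n k f + chain d n k g := by
  induction k generalizing f g with
  | zero => simp [chain]
  | succ k ih =>
    have h1 : ∀ f g : List V → ZMod 2, sweep (d k) n (fun t => f t + g t)
        = fun t => sweep (d k) n f t + sweep (d k) n g t := by
      intro f g; funext t; rw [sweep_add]
    simp only [chain, h1, ih]; ring

lemma chain_neg (d : ℕ → V) (n k : ℕ) (f : List V → ZMod 2) :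
    chain d n k (fun l => f (l.map (- ·))) = chain d n k f := by
  cases k with
  | zero => simp [chain]
  | succ k =>
    have : (fun l : List V => f ((l.map (- ·)).map (- ·))) = f := by
      funext l; simp [List.map_map]
    simp only [chain, this]
    exact add_comm _ _

lemma chain_zero (d : ℕ → V) (n k : ℕ) : chain d n k (fun _ => 0) = 0 := by
  induction k with
  | zero => simp [chain]
  | succ k ih =>
    have : sweep (d k) n (fun _ => 0) = fun _ => 0 := by funext l; rw [sweep_zero]
    simp only [chain, this, ih, add_zero]

lemma cobd_neg (f : List V → ZMod 2) :
    (fun l => cobd f (l.map (- ·))) = cobd (fun l => f (l.map (- ·))) := by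
  funext l; rw [cobd_map]

end Chains

section HilbertChains

variable {H : Type*} [NormedAddCommGroup H] [InnerProductSpace ℝ H]

/-- The tuples occurring in the `k`-dimensional chain: they lie in the span of the first `k`
basis vectors, in a bounded region, and have mesh at most `k * δ`. -/
def IsSmall (e : ℕ → H) (δ : ℝ) (n k : ℕ) (l : List H) : Prop :=
  (∀ x ∈ l, x ∈ Submodule.span ℝ (e '' Set.Iio k)) ∧ (∀ x ∈ l, ‖x‖ ≤ k * (n * δ)) ∧
    ∀ x ∈ l, ∀ y ∈ l, ‖x - y‖ ≤ k * δ

lemma IsSmall.neg {e : ℕ → H} {δ : ℝ} {n k : ℕ} {l : List H} (h : IsSmall e δ n k l) :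
    IsSmall e δ n k (l.map (- ·)) := by
  obtain ⟨h1, h2, h3⟩ := h
  refine ⟨?_, ?_, ?_⟩
  · intro x hx
    obtain ⟨y, hy, rfl⟩ := List.mem_map.1 hx
    exact Submodule.neg_mem _ (h1 y hy)
  · intro x hx
    obtain ⟨y, hy, rfl⟩ := List.mem_map.1 hx
    simpa using h2 y hy
  · intro x hx z hz
    obtain ⟨y, hy, rfl⟩ := List.mem_map.1 hx
    obtain ⟨w, hw, rfl⟩ := List.mem_map.1 hz
    have := h3 w hw y hy
    rwa [show -y - -w = w - y by abel]

lemma IsSmall.sweep {e : ℕ → H} (he : Orthonormal ℝ e) {δ : ℝ} (hδ : 0 ≤ δ) {n k : ℕ}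
    {l : List H} (h : IsSmall e δ n k l) {j : ℕ} (hj : j < n) {t : List H}
    (ht : ∀ y ∈ t, ∃ x ∈ l, y = x + j • (δ • e k) ∨ y = x + (j + 1) • (δ • e k)) :
    IsSmall e δ n (k + 1) t := by
  obtain ⟨h1, h2, h3⟩ := h
  have key : ∀ y ∈ t, ∃ x ∈ l, ∃ i : ℕ, j ≤ i ∧ i ≤ j + 1 ∧ y = x + ((i : ℝ) * δ) • e k := by
    intro y hy
    obtain ⟨x, hx, hxy⟩ := ht y hy
    rcases hxy with h | h
    · exact ⟨x, hx, j, le_rfl, by omega, by rw [h, mul_smul, Nat.cast_smul_eq_nsmul]⟩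
    · exact ⟨x, hx, j + 1, by omega, le_rfl, by rw [h, mul_smul, Nat.cast_smul_eq_nsmul]⟩
  have hek : ‖e k‖ = 1 := he.1 k
  refine ⟨?_, ?_, ?_⟩
  · intro y hy
    obtain ⟨x, hx, i, -, -, rfl⟩ := key y hy
    apply Submodule.add_mem
    · exact Submodule.span_mono (Set.image_mono (fun a ha => by
        simp only [Set.mem_Iio] at ha ⊢; omega)) (h1 x hx)
    · exact Submodule.smul_mem _ _ (Submodule.subset_span ⟨k, by simp, rfl⟩)
  · intro y hy
    obtain ⟨x, hx, i, hi1, hi2, rfl⟩ := key y hy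
    have hi : (i : ℝ) ≤ n := by exact_mod_cast (by omega : i ≤ n)
    calc ‖x + ((i : ℝ) * δ) • e k‖ ≤ ‖x‖ + ‖((i : ℝ) * δ) • e k‖ := norm_add_le _ _
      _ = ‖x‖ + i * δ := by
        rw [norm_smul, hek, mul_one, Real.norm_of_nonneg (by positivity)]
      _ ≤ k * (n * δ) + n * δ := by
        have := h2 x hx
        have := mul_le_mul_of_nonneg_right hi hδ
        linarith
      _ = ((k + 1 : ℕ) : ℝ) * (n * δ) := by push_cast; ring
  · intro y hy z hz
    obtain ⟨x, hx, i, hi1, hi2, rfl⟩ := key y hy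
    obtain ⟨w, hw, i', hi1', hi2', rfl⟩ := key z hz
    have hi : |(i : ℝ) - i'| ≤ 1 := by
      have : ((i : ℤ) - i').natAbs ≤ 1 := by omega
      rw [abs_le]
      constructor
      · have : (i' : ℝ) ≤ i + 1 := by exact_mod_cast (by omega : i' ≤ i + 1)
        linarith
      · have : (i : ℝ) ≤ i' + 1 := by exact_mod_cast (by omega : i ≤ i' + 1)
        linarith
    calc ‖x + ((i : ℝ) * δ) • e k - (w + ((i' : ℝ) * δ) • e k)‖
        = ‖(x - w) + (((i : ℝ) - i') * δ) • e k‖ := by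
          congr 1; rw [sub_mul, sub_smul]; abel
      _ ≤ ‖x - w‖ + ‖(((i : ℝ) - i') * δ) • e k‖ := norm_add_le _ _
      _ = ‖x - w‖ + |(i : ℝ) - i'| * δ := by
        rw [norm_smul, hek, mul_one, norm_mul, Real.norm_eq_abs, Real.norm_of_nonneg hδ]
      _ ≤ k * δ + 1 * δ := add_le_add (h3 x hx w hw) (mul_le_mul_of_nonneg_right hi hδ)
      _ = ((k + 1 : ℕ) : ℝ) * δ := by push_cast; ring

variable {e : ℕ → H} {δ : ℝ} {n : ℕ}

lemma chain_congr (he : Orthonormal ℝ e) (hδ : 0 ≤ δ) {k : ℕ} {f g : List H → ZMod 2}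
    (h : ∀ l, IsSmall e δ n k l → f l = g l) :
    chain (fun i => δ • e i) n k f = chain (fun i => δ • e i) n k g := by
  induction k generalizing f g with
  | zero =>
    apply h
    refine ⟨?_, ?_, ?_⟩ <;> simp
  | succ k ih =>
    simp only [chain]
    congr 1
    · apply ih
      intro l hl
      apply sweep_congr
      rintro t ⟨j, hj, ht⟩
      exact h t (hl.sweep he hδ hj ht)
    · apply ih
      intro l hl
      apply sweep_congr
      rintro t ⟨j, hj, ht⟩
      exact h _ (hl.sweep he hδ hj ht).neg

lemma half_congr (he : Orthonormal ℝ e) (hδ : 0 ≤ δ) {k : ℕ} {f g : List H → ZMod 2}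
    (h : ∀ l, IsSmall e δ n (k + 1) l → f l = g l) :
    chain (fun i => δ • e i) n k (sweep (δ • e k) n f)
      = chain (fun i => δ • e i) n k (sweep (δ • e k) n g) := by
  apply chain_congr he hδ
  intro l hl
  apply sweep_congr
  rintro t ⟨j, hj, ht⟩
  exact h t (hl.sweep he hδ hj ht)

/-- The tuples all of whose points have the same one of their first `k` coordinates of absolute value
at least `R`; for instance those in a face of the `k`-dimensional cube. -/
def IsFar (e : ℕ → H) (R : ℝ) (k : ℕ) (l : List H) : Prop :=
  ∃ i < k, ∀ x ∈ l, R ≤ |⟪e i, x⟫|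

lemma sweep_far {R : ℝ} {k : ℕ} {f : List H → ZMod 2} (he : Orthonormal ℝ e)
    (hf : ∀ l, IsFar e R (k + 1) l → f l = 0)
    (l : List H) (hl : IsFar e R k l) : sweep (δ • e k) n f l = 0 := by
  rw [← sweep_zero (δ • e k) n l]
  apply sweep_congr
  rintro t ⟨j, hj, ht⟩
  apply hf
  obtain ⟨i, hik, hi⟩ := hl
  refine ⟨i, by omega, fun y hy => ?_⟩
  have h0 : ⟪e i, e k⟫ = 0 := he.2 (by omega)
  obtain ⟨x, hx, rfl | rfl⟩ := ht y hy
  · rw [inner_add_right, ← Nat.cast_smul_eq_nsmul ℝ, inner_smul_right, inner_smul_right, h0]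
    simpa using hi x hx
  · rw [inner_add_right, ← Nat.cast_smul_eq_nsmul ℝ, inner_smul_right, inner_smul_right, h0]
    simpa using hi x hx

/-- Relative to its far part, the boundary of the half of the `(k + 1)`-dimensional chain is the
`k`-dimensional chain, provided the latter is a relative cycle. -/
lemma half_cobd_of (he : Orthonormal ℝ e) (hδ : 0 ≤ δ) {R : ℝ} (hR : R ≤ n * δ)
    {k : ℕ} {f : List H → ZMod 2}
    (hf : ∀ l, IsFar e R (k + 1) l → f l = 0)
    (hZ : ∀ f : List H → ZMod 2, (∀ l, IsFar e R k l → f l = 0) → f [] = 0 →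
      chain (fun i => δ • e i) n k (cobd f) = 0) :
    chain (fun i => δ • e i) n k (sweep (δ • e k) n (cobd f))
      = chain (fun i => δ • e i) n k f := by
  have h1 : sweep (δ • e k) n (cobd f) = fun l => (f (l.map (· + n • (δ • e k))) + f l)
      + cobd (sweep (δ • e k) n f) l := by
    funext l; rw [sweep_cobd]
  rw [h1, chain_add, chain_add, hZ _ (sweep_far he hf) (by simp [sweep, prism]), add_zero]
  have : chain (fun i => δ • e i) n k (fun l => f (l.map (· + n • (δ • e k))))
      = chain (fun i => δ • e i) n k (fun _ => 0) := by
    apply chain_congr he hδ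
    intro l hl
    apply hf
    refine ⟨k, by omega, ?_⟩
    intro y hy
    obtain ⟨x, hx, rfl⟩ := List.mem_map.1 hy
    have hx0 : ⟪e k, x⟫ = 0 := by
      have := hl.1 x hx
      clear hx hy
      induction this using Submodule.span_induction with
      | mem x h =>
        obtain ⟨i, hi, rfl⟩ := h
        exact he.2 (by simp only [Set.mem_Iio] at hi; omega)
      | zero => simp
      | add x y _ _ h1 h2 => rw [inner_add_right, h1, h2, add_zero]
      | smul c x _ h => rw [inner_smul_right, h, mul_zero]
    have hkk : ⟪e k, e k⟫ = (1 : ℝ) := by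
      rw [real_inner_self_eq_norm_sq, he.1 k]; norm_num
    rw [inner_add_right, hx0, ← Nat.cast_smul_eq_nsmul ℝ, inner_smul_right, inner_smul_right, hkk,
      mul_one, zero_add, abs_of_nonneg (by positivity)]
    exact hR
  rw [this, chain_zero, zero_add]

/-- The `k`-dimensional chain is a cycle relative to its far part. -/
lemma chain_cobd (he : Orthonormal ℝ e) (hδ : 0 ≤ δ) {R : ℝ} (hR : R ≤ n * δ) (k : ℕ)
    (f : List H → ZMod 2)
    (hf : ∀ l, IsFar e R k l → f l = 0) (hf0 : f [] = 0) :
    chain (fun i => δ • e i) n k (cobd f) = 0 := by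
  induction k generalizing f with
  | zero => simp [chain, cobd, hf0]
  | succ k ih =>
    rw [chain, cobd_neg, half_cobd_of he hδ hR hf ih, half_cobd_of he hδ hR _ ih,
      chain_neg, CharTwo.add_self_eq_zero]
    rintro l ⟨i, hi, hl⟩
    apply hf
    refine ⟨i, hi, fun y hy => ?_⟩
    obtain ⟨x, hx, rfl⟩ := List.mem_map.1 hy
    simpa using hl x hx

/-- Stokes' theorem for the half chain: its boundary is the `k`-dimensional chain plus tuples lying
far from the origin, on which `f` vanishes. -/
lemma half_cobd (he : Orthonormal ℝ e) (hδ : 0 ≤ δ) {R : ℝ} (hR : R ≤ n * δ)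
    {k : ℕ} {f : List H → ZMod 2}
    (hf : ∀ l, IsFar e R (k + 1) l → f l = 0) :
    chain (fun i => δ • e i) n k (sweep (δ • e k) n (cobd f))
      = chain (fun i => δ • e i) n k f :=
  half_cobd_of he hδ hR hf (chain_cobd he hδ hR k)

end HilbertChains

/-! ### The covering theorem -/

section Covering

variable {H : Type*}

/-- The list of functions `s (k - 2), …, s 0, χ` (of length `k`). -/
def signList (χ : H → ZMod 2) (s : ℕ → H → ZMod 2) : ℕ → List (H → ZMod 2)
  | 0 => []
  | 1 => [χ]
  | k + 2 => s k :: signList χ s (k + 1)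

/-- The cochain whose sum over the `k`-dimensional chain is computed inductively: `χ` for `k = 0`
and `s (k - 1) ∪ δ(s (k - 2)) ∪ ⋯ ∪ δ(s 0) ∪ δχ` for `k ≥ 1`. -/
def signCochain (χ : H → ZMod 2) (s : ℕ → H → ZMod 2) : ℕ → List H → ZMod 2
  | 0 => cupHead χ []
  | k + 1 => cupHead (s k) (signList χ s (k + 1))

lemma cobd_signCochain (χ : H → ZMod 2) (s : ℕ → H → ZMod 2) (k : ℕ) :
    cobd (signCochain χ s k) = cup (signList χ s (k + 1)) := by
  funext l
  cases k with
  | zero => rw [signCochain, cobd_cupHead]; rfl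
  | succ k => rw [signCochain, cobd_cupHead]; rfl

lemma mem_signList_chi (χ : H → ZMod 2) (s : ℕ → H → ZMod 2) (k : ℕ) :
    χ ∈ signList χ s (k + 1) := by
  induction k with
  | zero => simp [signList]
  | succ k ih => simp [signList, ih]

lemma mem_signList_s (χ : H → ZMod 2) (s : ℕ → H → ZMod 2) {i k : ℕ} (h : i < k) :
    s i ∈ signList χ s (k + 1) := by
  induction k with
  | zero => omega
  | succ k ih =>
    rcases Nat.lt_succ_iff_lt_or_eq.1 h with h | rfl
    · simp [signList, ih h]
    · simp [signList]

lemma of_mem_signList {χ : H → ZMod 2} {s : ℕ → H → ZMod 2} {k : ℕ} {f : H → ZMod 2}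
    (h : f ∈ signList χ s (k + 1)) : f = χ ∨ ∃ i, f = s i := by
  induction k with
  | zero => left; simpa [signList] using h
  | succ k ih =>
    rw [signList] at h
    rcases List.mem_cons.1 h with h | h
    · exact Or.inr ⟨k, h⟩
    · exact ih h

variable [NormedAddCommGroup H] [InnerProductSpace ℝ H]

/-- A Lusternik–Schnirelmann type theorem. Let `F` be spanned by `L + 1` orthonormal vectors, let
`χ` be an even two-valued function equal to `1` near the origin and to `0` far away, and let
`s 0, …, s (L - 1)` be two-valued functions with `s i (-x) ≠ s i x` for `x ≠ 0`.
Then these `L + 1` functions cannot have the property that near each point of `F` one of them is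
constant on `F`: otherwise the cochain
`δ(s (L - 1)) ∪ ⋯ ∪ δ(s 0) ∪ δχ` vanishes on all small tuples, whereas its sum over half of the
chain of dimension `L + 1` equals `χ 0 = 1`. -/
theorem no_symmetric_cover {e : ℕ → H} (he : Orthonormal ℝ e) (L : ℕ) (χ : H → ZMod 2)
    (s : ℕ → H → ZMod 2) {R : ℝ} (hR : 0 < R)
    (hχ : ∀ x, χ (-x) = χ x) (hs : ∀ i, ∀ x ≠ 0, s i (-x) = s i x + 1)
    (hχ0 : χ 0 = 1) (hχR : ∀ x, R ≤ ‖x‖ → χ x = 0)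
    (hχn : ∀ᶠ x in 𝓝 (0 : H), x ∈ Submodule.span ℝ (e '' Set.Iio (L + 1)) → χ x = 1)
    (hloc : ∀ x ∈ Submodule.span ℝ (e '' Set.Iio (L + 1)),
      (∀ᶠ y in 𝓝 x, y ∈ Submodule.span ℝ (e '' Set.Iio (L + 1)) → χ y = χ x) ∨
      ∃ i < L, ∀ᶠ y in 𝓝 x, y ∈ Submodule.span ℝ (e '' Set.Iio (L + 1)) → s i y = s i x) :
    False := by
  set F := Submodule.span ℝ (e '' Set.Iio (L + 1)) with hF
  have hfin : FiniteDimensional ℝ F :=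
    FiniteDimensional.span_of_finite ℝ ((Set.finite_Iio (L + 1)).image e)
  -- a Lebesgue number for the compact set containing all chains
  obtain ⟨δ₁, hδ₁, hleb⟩ : ∃ δ₁ > 0, ∀ l : List H, (∀ x ∈ l, x ∈ F) →
      (∀ x ∈ l, ‖x‖ ≤ (L + 1) * R) → (∀ x ∈ l, ∀ y ∈ l, ‖x - y‖ < δ₁) →
      (∀ x ∈ l, ∀ y ∈ l, χ x = χ y) ∨ ∃ i < L, ∀ x ∈ l, ∀ y ∈ l, s i x = s i y := by
    have hK : IsCompact ((F : Set H) ∩ Metric.closedBall 0 ((L + 1) * R)) := by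
      have h1 : IsCompact (Metric.closedBall (0 : F) ((L + 1) * R)) := isCompact_closedBall _ _
      have h2 := h1.image (f := ((↑) : F → H)) continuous_subtype_val
      convert h2 using 1
      ext x
      simp only [Set.mem_inter_iff, SetLike.mem_coe, mem_closedBall_zero_iff, Set.mem_image]
      constructor
      · rintro ⟨h1, h2⟩; exact ⟨⟨x, h1⟩, by simpa using h2, rfl⟩
      · rintro ⟨y, h1, rfl⟩; exact ⟨y.2, by simpa using h1⟩
    have : ∀ x : H, ∃ U ∈ 𝓝 x, x ∈ F →
        ((∀ y ∈ U, y ∈ F → χ y = χ x) ∨ ∃ i < L, ∀ y ∈ U, y ∈ F → s i y = s i x) := by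
      intro x
      by_cases hx : x ∈ F
      · rcases hloc x hx with h | ⟨i, hi, h⟩
        · exact ⟨_, h, fun _ => Or.inl fun y hy => hy⟩
        · exact ⟨_, h, fun _ => Or.inr ⟨i, hi, fun y hy => hy⟩⟩
      · exact ⟨Set.univ, Filter.univ_mem, fun h => absurd h hx⟩
    choose U hU hU' using this
    obtain ⟨V, hV, hVU⟩ := lebesgue_number_lemma_nhds' hK (U := fun x _ => U x) (fun x _ => hU x)
    obtain ⟨δ₁, hδ₁, hδV⟩ := Metric.mem_uniformity_dist.1 hV
    refine ⟨δ₁, hδ₁, fun l hlF hlR hl => ?_⟩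
    cases l with
    | nil => left; simp
    | cons a t =>
      obtain ⟨z, hz⟩ := hVU a ⟨hlF a (by simp), by simpa using hlR a (by simp)⟩
      have hmem : ∀ x ∈ a :: t, x ∈ U z := by
        intro x hx
        apply hz
        apply hδV
        rw [dist_eq_norm]
        exact hl a (by simp) x hx
      rcases hU' z z.2.1 with h | ⟨i, hi, h⟩
      · left
        intro x hx y hy
        rw [h x (hmem x hx) (hlF x hx), h y (hmem y hy) (hlF y hy)]
      · right
        refine ⟨i, hi, fun x hx y hy => ?_⟩
        rw [h x (hmem x hx) (hlF x hx), h y (hmem y hy) (hlF y hy)]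
  obtain ⟨ρ, hρ, hχρ⟩ := Metric.eventually_nhds_iff.1 hχn
  obtain ⟨n, hn⟩ := exists_nat_gt ((L + 1) * R / min δ₁ ρ)
  have hm : 0 < min δ₁ ρ := lt_min hδ₁ hρ
  have hn0 : (0 : ℝ) < n := lt_of_le_of_lt (by positivity) hn
  set δ := R / n with hδdef
  have hδ : 0 ≤ δ := by positivity
  have hnδ : n * δ = R := by rw [hδdef]; field_simp
  have hLδ : (L + 1) * δ < min δ₁ ρ := by
    rw [div_lt_iff₀ hm] at hn
    rw [hδdef, ← mul_div_assoc, div_lt_iff₀ hn0]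
    linarith
  have hsmallF : ∀ {k : ℕ} {l : List H}, k ≤ L + 1 → IsSmall e δ n k l → ∀ x ∈ l, x ∈ F := by
    intro k l hk hl x hx
    exact Submodule.span_mono (Set.image_mono (Set.Iio_subset_Iio hk)) (hl.1 x hx)
  have hmesh : ∀ {k : ℕ} {l : List H}, k ≤ L + 1 → IsSmall e δ n k l →
      ∀ x ∈ l, ∀ y ∈ l, ‖x - y‖ < min δ₁ ρ := by
    intro k l hk hl x hx y hy
    have h1 : (k : ℝ) ≤ L + 1 := by exact_mod_cast hk
    exact lt_of_le_of_lt ((hl.2.2 x hx y hy).trans (mul_le_mul_of_nonneg_right h1 hδ)) hLδ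
  have hsmall : ∀ {l : List H}, IsSmall e δ n (L + 1) l →
      (∀ x ∈ l, ∀ y ∈ l, χ x = χ y) ∨ ∃ i < L, ∀ x ∈ l, ∀ y ∈ l, s i x = s i y := by
    intro l hl
    apply hleb l (hsmallF le_rfl hl)
    · intro x hx
      have := hl.2.1 x hx
      rw [hnδ] at this
      exact_mod_cast this
    · intro x hx y hy
      exact (hmesh le_rfl hl x hx y hy).trans_le (min_le_left _ _)
  have hzero : ∀ {k : ℕ} {l : List H}, k ≤ L + 1 → IsSmall e δ n k l → 0 ∈ l →
      ∀ x ∈ l, χ x = 1 := by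
    intro k l hk hl h0 x hx
    apply hχρ _ (hsmallF hk hl x hx)
    rw [dist_eq_norm]
    exact (hmesh hk hl x hx 0 h0).trans_le (min_le_right _ _)
  have hfar : ∀ (k : ℕ) (l : List H), IsFar e R (k + 1) l → signCochain χ s k l = 0 := by
    rintro k l ⟨i, -, hl⟩
    have hl0 : ∀ x ∈ l, χ x = 0 := by
      intro x hx
      apply hχR
      calc R ≤ |⟪e i, x⟫| := hl x hx
        _ ≤ ‖e i‖ * ‖x‖ := abs_real_inner_le_norm _ _
        _ = ‖x‖ := by rw [he.1 i, one_mul]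
    match k, l with
    | 0, [] => rfl
    | k + 1, [] => rfl
    | 0, a :: t => simp only [signCochain, cupHead, hl0 a (by simp), zero_mul]
    | k + 1, a :: t =>
      simp only [signCochain, cupHead]
      rw [cup_eq_zero _ _ χ (mem_signList_chi χ s k), mul_zero]
      intro x hx y hy
      rw [hl0 x hx, hl0 y hy]
  -- oddness of `s k`: symmetrizing the cochain of degree `k + 1` leaves a coboundary
  have hsym : ∀ {k : ℕ} {l : List H}, k ≤ L → IsSmall e δ n (k + 1) l →
      signCochain χ s (k + 1) l + signCochain χ s (k + 1) (l.map (- ·))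
        = cup (signList χ s (k + 1)) l := by
    intro k l hk hl
    cases l with
    | nil => cases k <;> simp [signCochain, cupHead, signList, cup]
    | cons a t =>
      simp only [signCochain, List.map_cons, cupHead]
      by_cases h0 : (0 : H) ∈ a :: t
      · have hc := hzero (by omega) hl h0
        have h1 : cup (signList χ s (k + 1)) (a :: t) = 0 := by
          apply cup_eq_zero _ _ χ (mem_signList_chi χ s k)
          intro x hx y hy
          rw [hc x hx, hc y hy]
        have h2 : cup (signList χ s (k + 1)) (-a :: t.map (- ·)) = 0 := by
          apply cup_eq_zero _ _ χ (mem_signList_chi χ s k)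
          rw [← List.map_cons (f := fun x : H => -x)]
          intro x hx y hy
          obtain ⟨x', hx', rfl⟩ := List.mem_map.1 hx
          obtain ⟨y', hy', rfl⟩ := List.mem_map.1 hy
          rw [hχ, hχ, hc x' hx', hc y' hy']
        rw [h1, h2]; ring
      · have hne : ∀ x ∈ a :: t, x ≠ 0 := fun x hx h => h0 (h ▸ hx)
        have h1 : cup (signList χ s (k + 1)) (-a :: t.map (- ·))
            = cup (signList χ s (k + 1)) (a :: t) := by
          rw [← List.map_cons (f := fun x : H => -x)]
          apply cup_map
          intro f hf x hx y hy
          rcases of_mem_signList hf with rfl | ⟨i, rfl⟩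
          · rw [hχ, hχ]
          · rw [hs i x (hne x hx), hs i y (hne y hy)]
            have : (1 : ZMod 2) + 1 = 0 := by decide
            linear_combination this
        rw [h1, hs k a (hne a (by simp))]
        have := CharTwo.add_self_eq_zero (s k a * cup (signList χ s (k + 1)) (a :: t))
        linear_combination this
  -- induction over the dimension, starting from `χ 0 = 1`
  have hind : ∀ k ≤ L, chain (fun i => δ • e i) n k (signCochain χ s k) = 1 := by
    intro k
    induction k with
    | zero => intro _; simp [chain, signCochain, cupHead, cup, hχ0]
    | succ k ih =>
      intro hk
      rw [chain, ← chain_add]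
      have h1 : (fun t => sweep (δ • e k) n (signCochain χ s (k + 1)) t
          + sweep (δ • e k) n (fun l => signCochain χ s (k + 1) (l.map (- ·))) t)
          = sweep (δ • e k) n (fun l => signCochain χ s (k + 1) l
            + signCochain χ s (k + 1) (l.map (- ·))) := by
        funext t; rw [sweep_add]
      rw [h1, half_congr he hδ (fun l hl => hsym (by omega) hl), ← cobd_signCochain,
        half_cobd he hδ hnδ.ge (hfar k), ih (by omega)]
  have h1 := half_cobd he hδ hnδ.ge (hfar L)
  rw [hind L le_rfl, cobd_signCochain,
    half_congr he hδ (g := fun _ => 0)] at h1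
  · have : sweep (δ • e L) n (fun _ => 0) = fun _ => 0 := by funext l; rw [sweep_zero]
    rw [this, chain_zero] at h1
    exact zero_ne_one h1
  · intro l hl
    rcases hsmall hl with h | ⟨i, hi, h⟩
    · exact cup_eq_zero _ _ χ (mem_signList_chi χ s L) h
    · exact cup_eq_zero _ _ (s i) (mem_signList_s χ s hi) h

end Covering

/-! ### A discrete descent map -/

section DescentMap

variable {H : Type*} [NormedAddCommGroup H]

/-- Admissible radii at `x`: on the ball of such a radius `ρ ≤ cap` the oscillation of `g` is
at most half of its size. -/
def oscRadii (g : H → H) (cap : ℝ) (x : H) : Set ℝ :=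
  {ρ | 0 ≤ ρ ∧ ρ ≤ cap ∧ ∀ y ∈ Metric.ball x ρ, ∀ z ∈ Metric.ball x ρ,
    ‖g y - g z‖ ≤ 1 / 2 * ‖g z‖}

/-- The largest admissible radius at `x`. -/
def oscRadius (g : H → H) (cap : ℝ) (x : H) : ℝ := sSup (oscRadii g cap x)

/-- One step of length `oscRadius / 2` in the direction of steepest descent. -/
def descentStep [InnerProductSpace ℝ H] (g : H → H) (cap : ℝ) (x : H) : H :=
  x - (oscRadius g cap x / 2 / ‖g x‖) • g x

/-- `T` is a discrete descent map for `Φ` with gradient `g` and steps of length at most `cap`;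
it replaces the flow of a pseudo-gradient field. -/
structure IsDescent [InnerProductSpace ℝ H] (Φ : H → ℝ) (g T : H → H) (cap : ℝ) : Prop where
  cont : Continuous T
  odd : ∀ x, T (-x) = -T x
  step_le : ∀ x, ‖T x - x‖ ≤ cap
  drop : ∀ x, Φ (T x) ≤ Φ x - 1 / 2 * ‖g x‖ * ‖T x - x‖
  segment_le : ∀ x, ∀ y ∈ segment ℝ x (T x), Φ y ≤ Φ x
  grad_le : ∀ x, ‖g (T x)‖ ≤ 3 / 2 * ‖g x‖
  crit : ∀ x, T x = x → g x = 0

variable {g : H → H} {cap : ℝ}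

lemma zero_mem_oscRadii (hcap : 0 < cap) (x : H) : 0 ∈ oscRadii g cap x :=
  ⟨le_rfl, hcap.le, by simp⟩

lemma oscRadii_bddAbove (x : H) : BddAbove (oscRadii g cap x) := ⟨cap, fun _ h => h.2.1⟩

lemma oscRadius_nonneg (hcap : 0 < cap) (x : H) : 0 ≤ oscRadius g cap x :=
  le_csSup (oscRadii_bddAbove x) (zero_mem_oscRadii hcap x)

lemma oscRadius_le (hcap : 0 < cap) (x : H) : oscRadius g cap x ≤ cap :=
  csSup_le ⟨0, zero_mem_oscRadii hcap x⟩ fun _ h => h.2.1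

lemma oscRadius_le_add (hcap : 0 < cap) (x y : H) :
    oscRadius g cap x ≤ oscRadius g cap y + ‖x - y‖ := by
  apply csSup_le ⟨0, zero_mem_oscRadii hcap x⟩
  rintro ρ ⟨h0, h1, h2⟩
  rcases le_total ρ ‖x - y‖ with h | h
  · linarith [oscRadius_nonneg (g := g) hcap y]
  · rw [← sub_le_iff_le_add]
    have hsub : Metric.ball y (ρ - ‖x - y‖) ⊆ Metric.ball x ρ := by
      apply Metric.ball_subset_ball'
      rw [dist_comm, dist_eq_norm]; linarith
    exact le_csSup (oscRadii_bddAbove y) ⟨by linarith, by linarith [norm_nonneg (x - y)],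
      fun u hu v hv => h2 u (hsub hu) v (hsub hv)⟩

lemma oscRadius_continuous (hcap : 0 < cap) : Continuous (oscRadius g cap) := by
  have : LipschitzWith 1 (oscRadius g cap) := by
    apply LipschitzWith.of_le_add
    intro x y
    rw [dist_eq_norm]
    exact oscRadius_le_add hcap x y
  exact this.continuous

lemma oscRadius_neg (hodd : ∀ x, g (-x) = -g x) (x : H) :
    oscRadius g cap (-x) = oscRadius g cap x := by
  have key : ∀ x : H, oscRadii g cap x ⊆ oscRadii g cap (-x) := by
    rintro x ρ ⟨h0, h1, h2⟩
    refine ⟨h0, h1, fun y hy z hz => ?_⟩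
    have hy' : -y ∈ Metric.ball x ρ := by
      rw [mem_ball_iff_norm] at hy ⊢
      rwa [← norm_neg, neg_sub, sub_neg_eq_add, add_comm, ← sub_neg_eq_add]
    have hz' : -z ∈ Metric.ball x ρ := by
      rw [mem_ball_iff_norm] at hz ⊢
      rwa [← norm_neg, neg_sub, sub_neg_eq_add, add_comm, ← sub_neg_eq_add]
    have := h2 _ hy' _ hz'
    rwa [hodd, hodd, norm_neg, neg_sub_neg, norm_sub_rev] at this
  unfold oscRadius
  congr 1
  apply Subset.antisymm _ (key x)
  have := key (-x)
  rwa [neg_neg] at this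

lemma oscRadius_pos (hcap : 0 < cap) (hg : Continuous g) {x : H} (hx : g x ≠ 0) :
    0 < oscRadius g cap x := by
  have hn : 0 < ‖g x‖ := norm_pos_iff.2 hx
  obtain ⟨ρ, hρ, h⟩ := Metric.continuousAt_iff.1 hg.continuousAt (‖g x‖ / 8) (by linarith)
  refine lt_of_lt_of_le (lt_min hρ hcap) (le_csSup (oscRadii_bddAbove x)
    ⟨(lt_min hρ hcap).le, min_le_right _ _, fun y hy z hz => ?_⟩)
  have h1 := h (lt_of_lt_of_le hy (min_le_left _ _))
  have h2 := h (lt_of_lt_of_le hz (min_le_left _ _))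
  rw [dist_eq_norm] at h1 h2
  have h3 : ‖g y - g z‖ ≤ ‖g y - g x‖ + ‖g z - g x‖ := by
    rw [norm_sub_rev (g z)]
    exact norm_sub_le_norm_sub_add_norm_sub _ _ _
  have h4 : ‖g x‖ ≤ ‖g z‖ + ‖g z - g x‖ := by
    rw [norm_sub_rev (g z)]
    exact norm_le_norm_add_norm_sub' _ _
  linarith

/-- Near a zero of `g` the admissible radii shrink; this gives continuity of the descent step at
the zeros. -/
lemma oscRadius_le_of_zero (hcap : 0 < cap) {x p : H} (hx : g x ≠ 0) (hp : g p = 0) :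
    oscRadius g cap x ≤ ‖x - p‖ := by
  apply csSup_le ⟨0, zero_mem_oscRadii hcap x⟩
  rintro ρ ⟨h0, h1, h2⟩
  by_contra! hlt
  have hpb : p ∈ Metric.ball x ρ := by
    rw [mem_ball_iff_norm, ← norm_neg, neg_sub]; exact hlt
  have hxb : x ∈ Metric.ball x ρ := by
    simp only [Metric.mem_ball, dist_self]
    exact lt_of_le_of_lt (norm_nonneg _) hlt
  have := h2 x hxb p hpb
  rw [hp, sub_zero, norm_zero, mul_zero] at this
  exact hx (norm_le_zero_iff.1 this)

lemma osc_of_norm_lt {x y : H} (h : ‖y - x‖ < oscRadius g cap x) :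
    ‖g y - g x‖ ≤ 1 / 2 * ‖g x‖ := by
  by_cases hne : (oscRadii g cap x).Nonempty
  · obtain ⟨ρ, hρ, hlt⟩ := exists_lt_of_lt_csSup hne h
    refine hρ.2.2 y (by rwa [mem_ball_iff_norm]) x ?_
    simp only [Metric.mem_ball, dist_self]
    exact lt_of_le_of_lt (norm_nonneg _) hlt
  · rw [Set.not_nonempty_iff_eq_empty] at hne
    rw [oscRadius, hne, Real.sSup_empty] at h
    exact absurd h (not_lt.2 (norm_nonneg _))

variable [InnerProductSpace ℝ H]

lemma descentStep_of_zero {x : H} (hx : g x = 0) : descentStep g cap x = x := by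
  simp [descentStep, hx]

lemma norm_descentStep_sub (hcap : 0 < cap) {x : H} (hx : g x ≠ 0) :
    ‖descentStep g cap x - x‖ = oscRadius g cap x / 2 := by
  have hn : ‖g x‖ ≠ 0 := norm_ne_zero_iff.2 hx
  have := oscRadius_nonneg (g := g) hcap x
  rw [descentStep, sub_sub_cancel_left, norm_neg, norm_smul, Real.norm_of_nonneg (by positivity)]
  field_simp

lemma descentStep_continuous (hcap : 0 < cap) (hg : Continuous g) :
    Continuous (descentStep g cap) := by
  rw [continuous_iff_continuousAt]
  intro p
  by_cases hp : g p = 0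
  · rw [ContinuousAt, descentStep_of_zero hp, tendsto_iff_norm_sub_tendsto_zero]
    have hbound : ∀ y, ‖descentStep g cap y - p‖ ≤ 3 / 2 * ‖y - p‖ := by
      intro y
      by_cases hy : g y = 0
      · rw [descentStep_of_zero hy]; linarith [norm_nonneg (y - p)]
      · have h1 := norm_descentStep_sub (g := g) hcap hy
        have h2 := oscRadius_le_of_zero hcap hy hp
        have h3 : ‖descentStep g cap y - p‖ ≤ ‖descentStep g cap y - y‖ + ‖y - p‖ :=
          norm_sub_le_norm_sub_add_norm_sub _ _ _
        linarith
    refine squeeze_zero (fun _ => norm_nonneg _) hbound ?_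
    have : Continuous fun y : H => 3 / 2 * ‖y - p‖ := by fun_prop
    convert this.tendsto p using 2
    simp
  · have hn : ‖g p‖ ≠ 0 := norm_ne_zero_iff.2 hp
    unfold descentStep
    have h1 := (oscRadius_continuous (g := g) hcap).continuousAt (x := p)
    have h2 := hg.continuousAt (x := p)
    exact continuousAt_id.sub (((h1.div_const 2).div h2.norm hn).smul h2)

/-- Within the ball of radius `oscRadius g cap x` the gradient differs from `g x` by at most
`‖g x‖ / 2`, so `Φ` decreases along the step at a rate of at least half its steepest rate. -/
theorem isDescent_descentStep {Φ : H → ℝ} (hΦ : ∀ x, HasFDerivAt Φ (innerSL ℝ (g x)) x)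
    (hg : Continuous g) (hodd : ∀ x, g (-x) = -g x) (hcap : 0 < cap) :
    IsDescent Φ g (descentStep g cap) cap := by
  have hseg : ∀ x, g x ≠ 0 → ∀ y ∈ segment ℝ x (descentStep g cap x),
      Φ y ≤ Φ x - 1 / 2 * ‖g x‖ * ‖y - x‖ := by
    intro x hx y hy
    have hn : 0 < ‖g x‖ := norm_pos_iff.2 hx
    have hρ := oscRadius_pos hcap hg hx
    have hlt : ∀ z ∈ segment ℝ x (descentStep g cap x), ‖z - x‖ < oscRadius g cap x := by
      intro z hz
      have := norm_sub_le_of_mem_segment hz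
      rw [norm_descentStep_sub hcap hx] at this
      linarith
    have hmv := Convex.norm_image_sub_le_of_norm_hasFDerivWithin_le' (f := Φ)
      (f' := fun z => innerSL ℝ (g z)) (φ := innerSL ℝ (g x)) (C := 1 / 2 * ‖g x‖)
      (s := segment ℝ x (descentStep g cap x)) (x := x) (y := y)
      (fun z _ => (hΦ z).hasFDerivWithinAt)
      (fun z hz => by
        rw [← map_sub, innerSL_apply_norm]
        exact osc_of_norm_lt (hlt z hz))
      (convex_segment _ _) (left_mem_segment _ _ _) hy
    have hin : ⟪g x, y - x⟫ = -(‖g x‖ * ‖y - x‖) := by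
      rw [segment_eq_image'] at hy
      obtain ⟨t, ht, rfl⟩ := hy
      simp only [descentStep, sub_sub_cancel_left, add_sub_cancel_left]
      rw [smul_neg, smul_smul, inner_neg_right, norm_neg, inner_smul_right, norm_smul,
        real_inner_self_eq_norm_sq, Real.norm_of_nonneg (mul_nonneg ht.1 (by positivity))]
      ring
    rw [innerSL_apply_apply, hin, Real.norm_eq_abs] at hmv
    have := (abs_le.1 hmv).2
    linarith
  refine ⟨descentStep_continuous hcap hg, fun x => ?_, fun x => ?_, fun x => ?_, fun x y hy => ?_,
    fun x => ?_, fun x hx => ?_⟩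
  · rw [descentStep, descentStep, oscRadius_neg hodd, hodd, norm_neg, smul_neg]; abel
  · by_cases hx : g x = 0
    · rw [descentStep_of_zero hx, sub_self, norm_zero]; exact hcap.le
    · rw [norm_descentStep_sub hcap hx]; linarith [oscRadius_le (g := g) hcap x]
  · by_cases hx : g x = 0
    · simp [descentStep_of_zero hx]
    · exact hseg x hx _ (right_mem_segment _ _ _)
  · by_cases hx : g x = 0
    · rw [descentStep_of_zero hx, segment_same] at hy
      rw [mem_singleton_iff.1 hy]
    · have := hseg x hx y hy
      have h2 : 0 ≤ 1 / 2 * ‖g x‖ * ‖y - x‖ := by positivity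
      linarith
  · by_cases hx : g x = 0
    · simp [descentStep_of_zero hx, hx]
    · have h1 : ‖g (descentStep g cap x) - g x‖ ≤ 1 / 2 * ‖g x‖ := by
        apply osc_of_norm_lt (cap := cap)
        rw [norm_descentStep_sub hcap hx]
        linarith [oscRadius_pos hcap hg hx]
      have h2 := norm_add_le (g (descentStep g cap x) - g x) (g x)
      rw [sub_add_cancel] at h2
      linarith
  · by_contra hne
    have h1 := norm_descentStep_sub (g := g) hcap hne
    rw [hx, sub_self, norm_zero] at h1
    linarith [oscRadius_pos hcap hg hne]

end DescentMap

/-! ### Convergence of trajectories -/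

section Trajectories

variable {H : Type*} [NormedAddCommGroup H]

/-- Almost critical points in the sense of Cerami, at levels in `[0, β]`. -/
def NearCrit (Φ : H → ℝ) (g : H → H) (β δ : ℝ) (x : H) : Prop :=
  0 ≤ Φ x ∧ Φ x ≤ β ∧ (1 + ‖x‖) * ‖g x‖ < δ

/-- Any two almost critical points at distance less than `mb` are within `ε` of each other. -/
def ClustersAt (Φ : H → ℝ) (g : H → H) (β mb ε δ : ℝ) : Prop :=
  ∀ v w, NearCrit Φ g β δ v → NearCrit Φ g β δ w → ‖v - w‖ < mb → ‖v - w‖ < ε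

/-- The trajectory of `x` under `T` enters the `ρ`-neighbourhood of `p` at a level within `η`
of `c`. -/
def Visits (Φ : H → ℝ) (T : H → H) (c η ρ : ℝ) (x p : H) : Prop :=
  ∃ n, ‖T^[n] x - p‖ < ρ ∧ |Φ (T^[n] x) - c| < η

/-- A walk whose steps are either paid for by the increase of `E`, or join two points of a
cluster of diameter `ε`, has its displacement bounded by the total increase of `E` plus `ε`:
the steps between the first and the last cluster point can be short-cut. -/
lemma walk_bound {x : ℕ → H} {E : ℕ → ℝ} {C : ℕ → Prop} {ε : ℝ} (hε : 0 ≤ ε) {m n : ℕ}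
    (hmn : m ≤ n) (hE : ∀ j, E j ≤ E (j + 1))
    (hstep : ∀ j, m ≤ j → j < n → ‖x (j + 1) - x j‖ ≤ E (j + 1) - E j ∨ (C j ∧ C (j + 1)))
    (hC : ∀ i j, m ≤ i → i ≤ n → m ≤ j → j ≤ n → C i → C j → ‖x i - x j‖ ≤ ε) :
    ‖x n - x m‖ ≤ E n - E m + ε := by
  have hmono : Monotone E := monotone_nat_of_le_succ hE
  have key : ∀ k, m ≤ k → k ≤ n → ‖x k - x m‖ ≤ E k - E m ∨
      ∃ i j, m ≤ i ∧ i ≤ j ∧ j ≤ k ∧ C i ∧ C j ∧ ‖x i - x m‖ ≤ E i - E m ∧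
        ‖x k - x j‖ ≤ E k - E j := by
    intro k hk
    induction k, hk using Nat.le_induction with
    | base => intro _; left; simp
    | succ k hk ih =>
      intro hkn
      have ih := ih (by omega)
      rcases hstep k hk (by omega) with h | ⟨h1, h2⟩
      · rcases ih with h' | ⟨i, j, hi, hij, hj, hCi, hCj, h3, h4⟩
        · left
          linarith [norm_sub_le_norm_sub_add_norm_sub (x (k + 1)) (x k) (x m)]
        · right
          refine ⟨i, j, hi, hij, by omega, hCi, hCj, h3, ?_⟩
          linarith [norm_sub_le_norm_sub_add_norm_sub (x (k + 1)) (x k) (x j)]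
      · right
        rcases ih with h' | ⟨i, j, hi, hij, hj, hCi, hCj, h3, h4⟩
        · exact ⟨k, k + 1, hk, by omega, le_rfl, h1, h2, h', by simp⟩
        · exact ⟨i, k + 1, hi, by omega, le_rfl, hCi, h2, h3, by simp⟩
  rcases key n hmn le_rfl with h | ⟨i, j, hi, hij, hj, hCi, hCj, h3, h4⟩
  · linarith
  · have h5 := hC j i (by omega) (by omega) (by omega) (by omega) hCj hCi
    have h6 := hmono hij
    linarith [norm_sub_le_norm_sub_add_norm_sub (x n) (x j) (x m),
      norm_sub_le_norm_sub_add_norm_sub (x j) (x i) (x m)]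

lemma exists_first_exit {f : ℕ → ℝ} {ρ : ℝ} {m n' : ℕ} (hm : f m < ρ) (hmn : m ≤ n')
    (hn' : ρ ≤ f n') : ∃ n, m < n ∧ n ≤ n' ∧ ρ ≤ f n ∧ ∀ j, m ≤ j → j < n → f j < ρ := by
  classical
  have hex : ∃ n, m ≤ n ∧ ρ ≤ f n := ⟨n', hmn, hn'⟩
  have hspec := Nat.find_spec hex
  refine ⟨Nat.find hex, ?_, Nat.find_min' hex ⟨hmn, hn'⟩, hspec.2, fun j hj hjn => ?_⟩
  · rcases hspec.1.lt_or_eq with h | h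
    · exact h
    · rw [← h] at hspec; linarith [hspec.2]
  · by_contra! hcon
    exact Nat.find_min hex hjn ⟨hj, hcon⟩

variable {Φ : H → ℝ} {g T : H → H} {cap β mb ε δ : ℝ}

lemma crit_eq_of_clusters (hcl : ∀ ε > 0, ∃ δ > 0, ClustersAt Φ g β mb ε δ) {p q : H}
    (hp : g p = 0) (hq : g q = 0) (hp0 : 0 ≤ Φ p) (hpβ : Φ p ≤ β) (hq0 : 0 ≤ Φ q)
    (hqβ : Φ q ≤ β) (hpq : ‖p - q‖ < mb) : p = q := by
  by_contra hne
  have hpos : 0 < ‖p - q‖ := norm_pos_iff.2 (sub_ne_zero.2 hne)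
  obtain ⟨δ, hδ, h⟩ := hcl _ hpos
  exact lt_irrefl _ (h p q ⟨hp0, hpβ, by simpa [hp] using hδ⟩ ⟨hq0, hqβ, by simpa [hq] using hδ⟩ hpq)

variable [InnerProductSpace ℝ H]

lemma IsDescent.antitone (hT : IsDescent Φ g T cap) {x : ℕ → H} (hx : ∀ n, x (n + 1) = T (x n)) :
    Antitone fun n => Φ (x n) := by
  apply antitone_nat_of_succ_le
  intro n
  rw [hx]
  exact hT.segment_le _ _ (right_mem_segment _ _ _)

/-- The displacement of a trajectory, up to `ε`, is paid for by the decrease of `Φ`. -/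
lemma IsDescent.drop_of_window (hT : IsDescent Φ g T cap) (hcap : cap ≤ 1) (hε : 0 ≤ ε)
    (hδ : 0 < δ) (hcl : ClustersAt Φ g β mb ε δ) {x : ℕ → H} (hx : ∀ n, x (n + 1) = T (x n))
    {m n : ℕ} (hmn : m ≤ n) (hlev : ∀ j, m ≤ j → j ≤ n → 0 ≤ Φ (x j) ∧ Φ (x j) ≤ β)
    {B : ℝ} (hB : ∀ j, m ≤ j → j ≤ n → 1 + ‖x j‖ ≤ B)
    (hd : ∀ i j, m ≤ i → i ≤ n → m ≤ j → j ≤ n → ‖x i - x j‖ < mb) :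
    δ / (6 * B) * (‖x n - x m‖ - ε) ≤ Φ (x m) - Φ (x n) := by
  have hBpos : 0 < B := by linarith [hB m le_rfl hmn, norm_nonneg (x m)]
  set c := δ / (6 * B) with hc
  have hcpos : 0 < c := by positivity
  have hw := walk_bound (x := x) (E := fun j => -Φ (x j) / c)
    (C := fun j => NearCrit Φ g β δ (x j)) hε hmn (fun j => by
      have := hT.antitone hx (Nat.le_succ j)
      simp only at this
      gcongr) (fun j hj hjn => ?_)
    (fun i j hi hi' hj hj' hCi hCj => (hcl _ _ hCi hCj (hd i j hi hi' hj hj')).le)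
  · have h1 : -Φ (x n) / c - -Φ (x m) / c = (Φ (x m) - Φ (x n)) / c := by ring
    rw [h1] at hw
    have h2 : ‖x n - x m‖ - ε ≤ (Φ (x m) - Φ (x n)) / c := by linarith
    rw [le_div_iff₀ hcpos] at h2
    linarith
  · by_cases hj3 : (1 + ‖x j‖) * ‖g (x j)‖ < δ / 3
    · right
      refine ⟨⟨(hlev j hj hjn.le).1, (hlev j hj hjn.le).2, by linarith⟩,
        ⟨(hlev (j + 1) (by omega) (by omega)).1, (hlev (j + 1) (by omega) (by omega)).2, ?_⟩⟩
      have h1 := hT.grad_le (x j)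
      have h2 := hT.step_le (x j)
      rw [← hx] at h1 h2
      have h3 := norm_le_norm_add_norm_sub' (x (j + 1)) (x j)
      have h4 : 1 + ‖x (j + 1)‖ ≤ 2 * (1 + ‖x j‖) := by linarith [norm_nonneg (x j)]
      calc (1 + ‖x (j + 1)‖) * ‖g (x (j + 1))‖
          ≤ (2 * (1 + ‖x j‖)) * (3 / 2 * ‖g (x j)‖) := by gcongr
        _ = 3 * ((1 + ‖x j‖) * ‖g (x j)‖) := by ring
        _ < δ := by linarith
    · left
      push Not at hj3
      have h1 := hT.drop (x j)
      rw [← hx] at h1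
      have h2 : δ / 3 ≤ B * ‖g (x j)‖ := hj3.trans (by gcongr; exact hB j hj hjn.le)
      have h3 : c ≤ 1 / 2 * ‖g (x j)‖ := by
        rw [hc, div_le_iff₀ (by positivity)]; linarith
      have h4 : c * ‖x (j + 1) - x j‖ ≤ 1 / 2 * ‖g (x j)‖ * ‖x (j + 1) - x j‖ := by gcongr
      have h5 : -Φ (x (j + 1)) / c - -Φ (x j) / c = (Φ (x j) - Φ (x (j + 1))) / c := by ring
      rw [h5, le_div_iff₀ hcpos]
      linarith

/-- A trajectory staying at nonnegative levels converges. Otherwise it makes infinitely many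
excursions of a fixed size `ε₀`; the norm grows at most linearly in their number, so the `k`-th one
costs at least a constant multiple of `1 / (k + 1)`, and the harmonic series diverges. -/
lemma IsDescent.cauchySeq (hT : IsDescent Φ g T cap) (hcap : cap ≤ 1) (hmb : 0 < mb)
    (hcap' : cap ≤ mb / 16) (hcl : ∀ ε > 0, ∃ δ > 0, ClustersAt Φ g β mb ε δ) {x : ℕ → H}
    (hx : ∀ n, x (n + 1) = T (x n)) (h0 : ∀ n, 0 ≤ Φ (x n)) (hβ : Φ (x 0) ≤ β) :
    CauchySeq x := by
  by_contra hnc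
  rw [Metric.cauchySeq_iff'] at hnc
  push Not at hnc
  obtain ⟨ε₁, hε₁, hnc⟩ := hnc
  obtain ⟨ε₀, hε₀, hε₀1, hε₀mb⟩ : ∃ ε₀ > 0, ε₀ ≤ ε₁ ∧ ε₀ ≤ mb / 4 :=
    ⟨min ε₁ (mb / 4), lt_min hε₁ (by linarith), min_le_left _ _, min_le_right _ _⟩
  obtain ⟨δ, hδ, hcl⟩ := hcl (ε₀ / 2) (by linarith)
  have hanti := hT.antitone hx
  -- every excursion of size `ε₀` costs an amount of `Φ` inversely proportional to the norm
  have hexc : ∀ m, ∃ n, ‖x n‖ ≤ ‖x m‖ + mb ∧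
      Φ (x n) ≤ Φ (x m) - δ / (6 * (1 + ‖x m‖ + mb)) * (ε₀ / 2) := by
    intro m
    obtain ⟨n', hn', hdist⟩ := hnc m
    rw [dist_eq_norm] at hdist
    obtain ⟨n, hmn, -, hn, hwin⟩ := exists_first_exit (f := fun j => ‖x j - x m‖) (ρ := ε₀)
      (by simpa using hε₀) hn' (hε₀1.trans hdist)
    have hwin' : ∀ j, m ≤ j → j ≤ n → ‖x j - x m‖ < mb / 2 := by
      intro j hj hjn
      rcases hjn.lt_or_eq with h | rfl
      · linarith [hwin j hj h]
      · obtain ⟨k, rfl⟩ : ∃ k, j = k + 1 := ⟨j - 1, by omega⟩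
        have h1 := hwin k (by omega) (by omega)
        have h2 := hT.step_le (x k)
        rw [← hx] at h2
        linarith [norm_sub_le_norm_sub_add_norm_sub (x (k + 1)) (x k) (x m)]
    have hnb : ∀ j, m ≤ j → j ≤ n → ‖x j‖ ≤ ‖x m‖ + mb := by
      intro j hj hjn
      linarith [norm_le_norm_add_norm_sub' (x j) (x m), hwin' j hj hjn]
    refine ⟨n, hnb n hmn.le le_rfl, ?_⟩
    have hdrop := hT.drop_of_window (B := 1 + ‖x m‖ + mb) hcap (by linarith) hδ hcl hx hmn.le
      (fun j _ _ => ⟨h0 j, (hanti (Nat.zero_le j)).trans hβ⟩)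
      (fun j hj hjn => by linarith [hnb j hj hjn])
      (fun i j hi hi' hj hj' => by
        have h1 := hwin' i hi hi'
        have h2 := hwin' j hj hj'
        rw [norm_sub_rev] at h2
        linarith [norm_sub_le_norm_sub_add_norm_sub (x i) (x m) (x j)])
    have hle : δ / (6 * (1 + ‖x m‖ + mb)) * (ε₀ / 2) ≤
        δ / (6 * (1 + ‖x m‖ + mb)) * (‖x n - x m‖ - ε₀ / 2) := by
      gcongr
      linarith [hn]
    linarith
  choose nxt hn1 hn2 using hexc
  set M := 1 + ‖x 0‖ + mb with hM
  have hMpos : 0 < M := by positivity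
  set κ := δ / (6 * M) * (ε₀ / 2) with hκ
  have hκpos : 0 < κ := by positivity
  have hnorm : ∀ k : ℕ, 1 + ‖x (nxt^[k] 0)‖ + mb ≤ (k + 1) * M := by
    intro k
    induction k with
    | zero => simp [hM]
    | succ k ih =>
      rw [Function.iterate_succ_apply']
      have := hn1 (nxt^[k] 0)
      push_cast
      have : mb ≤ M := by rw [hM]; linarith [norm_nonneg (x 0)]
      linarith
  have hdec : ∀ k : ℕ, Φ (x (nxt^[k] 0)) ≤
      β - κ * ∑ i ∈ Finset.range k, (1 / ((i : ℝ) + 1)) := by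
    intro k
    induction k with
    | zero => simpa using hβ
    | succ k ih =>
      rw [Function.iterate_succ_apply', Finset.sum_range_succ, mul_add]
      have h1 := hn2 (nxt^[k] 0)
      have h2 : κ * (1 / ((k : ℝ) + 1)) ≤ δ / (6 * (1 + ‖x (nxt^[k] 0)‖ + mb)) * (ε₀ / 2) := by
        have : κ * (1 / ((k : ℝ) + 1)) = δ / (6 * ((k + 1) * M)) * (ε₀ / 2) := by
          rw [hκ]; field_simp
        rw [this]
        gcongr
        exact hnorm k
      linarith
  have hdiv := Real.tendsto_sum_range_one_div_nat_succ_atTop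
  obtain ⟨k, hk⟩ := (hdiv.eventually_gt_atTop (β / κ)).exists
  have h1 := hdec k
  have h2 := h0 (nxt^[k] 0)
  rw [div_lt_iff₀ hκpos] at hk
  linarith

/-- Moving from one critical point to another would cost more than the level window `2 η`. -/
lemma IsDescent.visit_unique (hT : IsDescent Φ g T cap) (hcap : cap ≤ 1) (hmb : 0 < mb)
    (hcap' : cap ≤ mb / 16) (hcl : ∀ ε > 0, ∃ δ > 0, ClustersAt Φ g β mb ε δ)
    (hδ : 0 < δ) (hclδ : ClustersAt Φ g β mb (mb / 32) δ) {K η c : ℝ} (hη : 0 < η)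
    (hηδ : η ≤ δ / (6 * (1 + K + mb)) * (mb / 32)) (hc0 : 0 ≤ c - η) (hcβ : c + η ≤ β)
    {x p q : H} (hp : g p = 0) (hq : g q = 0) (hpc : Φ p = c) (hqc : Φ q = c)
    (hpK : ‖p‖ ≤ K) (hqK : ‖q‖ ≤ K) (hvp : Visits Φ T c η (mb / 8) x p)
    (hvq : Visits Φ T c η (mb / 8) x q) : p = q := by
  obtain ⟨n, hn, hn'⟩ := hvp
  obtain ⟨k, hk, hk'⟩ := hvq
  wlog hnk : n ≤ k generalizing n k p q
  · exact (this hq hp hqc hpc hqK hpK k hk hk' n hn hn' (by omega)).symm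
  by_contra hne
  have hfar : mb ≤ ‖p - q‖ := by
    by_contra! hlt
    exact hne (crit_eq_of_clusters hcl hp hq (by linarith) (by linarith) (by linarith)
      (by linarith) hlt)
  set y : ℕ → H := fun j => T^[j] x with hy
  have hyT : ∀ j, y (j + 1) = T (y j) := fun j => Function.iterate_succ_apply' _ _ _
  have hanti := hT.antitone hyT
  have hkfar : mb / 4 ≤ ‖y k - p‖ := by
    have := norm_sub_le_norm_sub_add_norm_sub p (y k) q
    rw [norm_sub_rev p (y k)] at this
    have hk2 : ‖y k - q‖ < mb / 8 := hk
    linarith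
  obtain ⟨l, hnl, hlk, hl, hwin⟩ := exists_first_exit (f := fun j => ‖y j - p‖) (ρ := mb / 4)
    (lt_trans hn (by linarith)) hnk hkfar
  have hwin' : ∀ j, n ≤ j → j ≤ l → ‖y j - p‖ < mb / 2 := by
    intro j hj hjn
    rcases hjn.lt_or_eq with h | rfl
    · linarith [hwin j hj h]
    · obtain ⟨i, rfl⟩ : ∃ i, j = i + 1 := ⟨j - 1, by omega⟩
      have h1 := hwin i (by omega) (by omega)
      have h2 := hT.step_le (y i)
      rw [← hyT] at h2
      linarith [norm_sub_le_norm_sub_add_norm_sub (y (i + 1)) (y i) p]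
  have hK : 0 ≤ K := (norm_nonneg p).trans hpK
  have hdrop := hT.drop_of_window (B := 1 + K + mb) hcap (by linarith) hδ hclδ hyT hnl.le
    (fun j hj hjl => by
      have h1 := hanti hj
      have h2 := hanti (hjl.trans hlk)
      simp only [hy] at h1 h2 ⊢
      have h3 := (abs_lt.1 hn').2
      have h4 := (abs_lt.1 hk').1
      constructor <;> linarith)
    (fun j hj hjl => by
      linarith [norm_le_norm_add_norm_sub' (y j) p, hwin' j hj hjl])
    (fun i j hi hi' hj hj' => by
        have h1 := hwin' i hi hi'
        have h2 := hwin' j hj hj'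
        rw [norm_sub_rev] at h2
        linarith [norm_sub_le_norm_sub_add_norm_sub (y i) p (y j)])
  have hdisp : mb / 8 < ‖y l - y n‖ := by
    have := norm_sub_le_norm_sub_add_norm_sub (y l) (y n) p
    simp only [hy] at this hl ⊢
    linarith
  have hκ : 0 < δ / (6 * (1 + K + mb)) := by positivity
  have h1 : δ / (6 * (1 + K + mb)) * (mb / 16) ≤
      δ / (6 * (1 + K + mb)) * (‖y l - y n‖ - mb / 32) := by
    gcongr
    linarith
  have h2 := hanti hlk
  have h3 := (abs_lt.1 hn').2
  have h4 := (abs_lt.1 hk').1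
  simp only [hy] at h2 hdrop h1
  linarith

end Trajectories

/-! ### The minimax argument -/

section Minimax

variable {H : Type*} [NormedAddCommGroup H] [InnerProductSpace ℝ H]

/-- A (discontinuous) odd two-valued function, chosen with the help of a well-ordering. -/
lemma exists_sign (H : Type*) [NormedAddCommGroup H] [NormedSpace ℝ H] :
    ∃ sg : H → ZMod 2, ∀ x ≠ 0, sg (-x) = sg x + 1 := by
  classical
  refine ⟨fun x => if WellOrderingRel x (-x) then 1 else 0, fun x hx => ?_⟩
  have hne : x ≠ -x := by
    intro h
    have h2 : (2 : ℝ) • x = 0 := by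
      rw [two_smul]
      nth_rewrite 2 [h]
      exact add_neg_cancel x
    exact hx ((smul_eq_zero.1 h2).resolve_left two_ne_zero)
  rcases trichotomous_of WellOrderingRel x (-x) with h | h | h
  · have h' : ¬ WellOrderingRel (-x) x := asymm_of WellOrderingRel h
    simp only [neg_neg, h, h', if_true, if_false]
    decide
  · exact absurd h hne
  · have h' : ¬ WellOrderingRel x (-x) := asymm_of WellOrderingRel h
    simp only [neg_neg, h, h', if_true, if_false]
    decide

lemma exists_orthonormal_seq (hdim : ¬ FiniteDimensional ℝ H) :
    ∃ e : ℕ → H, Orthonormal ℝ e := by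
  let b := Module.Basis.ofVectorSpace ℝ H
  have hinf : Infinite (Module.Basis.ofVectorSpaceIndex ℝ H) := by
    by_contra h
    rw [not_infinite_iff_finite] at h
    exact hdim (Module.Finite.of_basis b)
  have hli := b.linearIndependent.comp _ (Infinite.natEmbedding _).injective
  exact ⟨_, InnerProductSpace.gramSchmidtNormed_orthonormal hli⟩

lemma odd_gradient {Φ : H → ℝ} {g : H → H} (hΦ : ∀ x, HasFDerivAt Φ (innerSL ℝ (g x)) x)
    (heven : ∀ x, Φ (-x) = Φ x) (x : H) : g (-x) = -g x := by
  have h1 : HasFDerivAt (fun y => Φ (-y)) ((innerSL ℝ (g (-x))).comp (-ContinuousLinearMap.id ℝ H))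
      x := (hΦ (-x)).comp x (hasFDerivAt_id x).neg
  simp only [heven] at h1
  have h2 := h1.unique (hΦ x)
  refine ext_inner_right ℝ fun v => ?_
  have h3 := congrArg (fun f => f v) h2
  simp only [ContinuousLinearMap.comp_apply, neg_apply,
    ContinuousLinearMap.id_apply, innerSL_apply_apply, inner_neg_right] at h3
  rw [inner_neg_left, ← h3, neg_neg]

variable {Φ : H → ℝ} {g T : H → H} {cap a r : ℝ}

/-- Below the level `a` the descent map does not cross the sphere of radius `r`. -/
lemma IsDescent.norm_lt_iff (hT : IsDescent Φ g T cap) (hsph : ∀ x, ‖x‖ = r → a ≤ Φ x) {x : H}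
    (hx : Φ x < a) : ‖T x‖ < r ↔ ‖x‖ < r := by
  have hpc : IsPreconnected (segment ℝ x (T x)) := (convex_segment _ _).isPreconnected
  have hno : ∀ y ∈ segment ℝ x (T x), ‖y‖ ≠ r := fun y hy h =>
    absurd (hsph y h) (not_le.2 (lt_of_le_of_lt (hT.segment_le x y hy) hx))
  constructor
  · intro h
    by_contra! hge
    obtain ⟨y, hy, hyr⟩ := hpc.intermediate_value (right_mem_segment _ _ _)
      (left_mem_segment _ _ _) continuous_norm.continuousOn ⟨h.le, hge⟩
    exact hno y hy hyr
  · intro h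
    by_contra! hge
    obtain ⟨y, hy, hyr⟩ := hpc.intermediate_value (left_mem_segment _ _ _)
      (right_mem_segment _ _ _) continuous_norm.continuousOn ⟨h.le, hge⟩
    exact hno y hy hyr

/-- The trajectory of `x` falls below the level `a` inside the sphere of radius `r`. -/
def FallsInside (Φ : H → ℝ) (T : H → H) (a r : ℝ) (x : H) : Prop :=
  ∃ n, Φ (T^[n] x) < a ∧ ‖T^[n] x‖ < r

lemma IsDescent.iterate_norm_lt_iff (hT : IsDescent Φ g T cap) (hsph : ∀ x, ‖x‖ = r → a ≤ Φ x)
    {x : H} {n : ℕ} (hx : Φ (T^[n] x) < a) {k : ℕ} (hk : n ≤ k) :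
    Φ (T^[k] x) < a ∧ (‖T^[k] x‖ < r ↔ ‖T^[n] x‖ < r) := by
  induction k, hk using Nat.le_induction with
  | base => exact ⟨hx, Iff.rfl⟩
  | succ k hk ih =>
    rw [Function.iterate_succ_apply']
    exact ⟨lt_of_le_of_lt (hT.segment_le _ _ (right_mem_segment _ _ _)) ih.1,
      (hT.norm_lt_iff hsph ih.1).trans ih.2⟩

lemma IsDescent.fallsInside_iff (hT : IsDescent Φ g T cap) (hsph : ∀ x, ‖x‖ = r → a ≤ Φ x)
    {x : H} {n : ℕ} (hx : Φ (T^[n] x) < a) : FallsInside Φ T a r x ↔ ‖T^[n] x‖ < r := by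
  refine ⟨fun ⟨k, hk, hk'⟩ => ?_, fun h => ⟨n, hx, h⟩⟩
  rcases le_total n k with h | h
  · exact (hT.iterate_norm_lt_iff hsph hx h).2.1 hk'
  · exact (hT.iterate_norm_lt_iff hsph hk h).2.2 hk'

lemma IsDescent.iterate_neg (hT : IsDescent Φ g T cap) (n : ℕ) (x : H) :
    T^[n] (-x) = -T^[n] x := by
  induction n with
  | zero => rfl
  | succ n ih => rw [Function.iterate_succ_apply', Function.iterate_succ_apply', ih, hT.odd]

/-- An even functional on an infinite dimensional Hilbert space with mountain pass geometry and
clustering almost critical points does not have a bounded critical set with finitely many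
critical values. Each critical value above `a` gives an odd two-valued function and the descent
to the inside of the sphere of radius `r` gives an even one; near each point one of them is constant,
contrary to `no_symmetric_cover`. -/
theorem no_finite_critical_levels [CompleteSpace H]
    (hΦ : ∀ x, HasFDerivAt Φ (innerSL ℝ (g x)) x) (hg : Continuous g)
    (heven : ∀ x, Φ (-x) = Φ x) (h0 : Φ 0 = 0) (hdim : ¬ FiniteDimensional ℝ H)
    (ha : 0 < a) (hr : 0 < r) (hsph : ∀ x, ‖x‖ = r → a ≤ Φ x)
    (hfar : ∀ F : Submodule ℝ H, FiniteDimensional ℝ F → ∃ R, ∀ x ∈ F, R ≤ ‖x‖ → Φ x < a)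
    {K : ℝ} (hK : ∀ p, g p = 0 → ‖p‖ ≤ K) (hfin : (Φ '' {p | g p = 0}).Finite)
    (hcl : ∀ β > 0, ∃ mb > 0, ∀ ε > 0, ∃ δ > 0, ClustersAt Φ g β mb ε δ) : False := by
  classical
  have hΦc : Continuous Φ := continuous_iff_continuousAt.2 fun x => (hΦ x).continuousAt
  have hodd := odd_gradient hΦ heven
  -- the critical levels from `a` on, enumerated by `c 0, …, c (L - 1)` and padded by `a`
  set S : Finset ℝ := hfin.toFinset.filter (a ≤ ·) with hS
  set L := S.card with hL
  set c : ℕ → ℝ := fun i => S.toList.getD i a with hc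
  have hcmem : ∀ i, c i = a ∨ c i ∈ S := by
    intro i
    by_cases hi : i < S.toList.length
    · right
      simp only [hc, List.getD_eq_getElem _ _ hi]
      exact Finset.mem_toList.1 (List.getElem_mem _)
    · left
      exact List.getD_eq_default _ _ (not_lt.1 hi)
  have hcsurj : ∀ v ∈ S, ∃ i < L, c i = v := by
    intro v hv
    obtain ⟨i, hi, h⟩ := List.mem_iff_getElem.1 (Finset.mem_toList.2 hv)
    refine ⟨i, by simpa using hi, ?_⟩
    simp only [hc, List.getD_eq_getElem _ _ hi, h]
  have hca : ∀ i, a ≤ c i := by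
    intro i
    rcases hcmem i with h | h
    · exact h.ge
    · exact (Finset.mem_filter.1 h).2
  obtain ⟨B₂, hB₂⟩ := hfin.bddAbove
  have hcB : ∀ i, c i ≤ max B₂ a := by
    intro i
    rcases hcmem i with h | h
    · exact h.le.trans (le_max_right _ _)
    · exact (hB₂ (hfin.mem_toFinset.1 (Finset.mem_filter.1 h).1)).trans (le_max_left _ _)
  obtain ⟨e, he⟩ := exists_orthonormal_seq hdim
  set F := Submodule.span ℝ (e '' Set.Iio (L + 1)) with hF
  have hFfin : FiniteDimensional ℝ F :=
    FiniteDimensional.span_of_finite ℝ ((Set.finite_Iio (L + 1)).image e)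
  obtain ⟨R₀, hR₀⟩ := hfar F hFfin
  obtain ⟨R, hRr, hR⟩ : ∃ R > r, ∀ x ∈ F, R ≤ ‖x‖ → Φ x < a :=
    ⟨max R₀ (r + 1), lt_of_lt_of_le (by linarith) (le_max_right _ _),
      fun x hx h => hR₀ x hx ((le_max_left _ _).trans h)⟩
  obtain ⟨B₁, hB₁⟩ : ∃ B₁, ∀ x ∈ F, Φ x ≤ max B₁ a := by
    have h1 : IsCompact (Metric.closedBall (0 : F) R) := isCompact_closedBall _ _
    obtain ⟨B₁, hB₁⟩ := h1.bddAbove_image (f := fun x : F => Φ x)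
      (hΦc.comp continuous_subtype_val).continuousOn
    refine ⟨B₁, fun x hx => ?_⟩
    rcases le_total ‖x‖ R with h | h
    · exact (hB₁ ⟨⟨x, hx⟩, by simpa using h, rfl⟩).trans (le_max_left _ _)
    · exact (hR x hx h).le.trans (le_max_right _ _)
  obtain ⟨β, hβ, hβF, hβc⟩ : ∃ β > 0, (∀ x ∈ F, Φ x ≤ β) ∧ ∀ i, c i + a ≤ β := by
    have h1 := le_max_right B₁ a
    have h2 := le_max_right B₂ a
    refine ⟨max B₁ a + max B₂ a, by linarith, fun x hx => ?_, fun i => ?_⟩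
    · linarith [hB₁ x hx]
    · linarith [hcB i]
  obtain ⟨mb, hmb, hcl⟩ := hcl β hβ
  obtain ⟨δ, hδ, hclδ⟩ := hcl (mb / 32) (by linarith)
  set K' := max K 0 with hK'
  obtain ⟨η, hη, hηa, hηδ⟩ : ∃ η > 0, η ≤ a / 2 ∧ η ≤ δ / (6 * (1 + K' + mb)) * (mb / 32) := by
    have : 0 ≤ K' := le_max_right _ _
    exact ⟨min (a / 2) (δ / (6 * (1 + K' + mb)) * (mb / 32)), lt_min (by linarith) (by positivity),
      min_le_left _ _, min_le_right _ _⟩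
  obtain ⟨cap, hcap, hcap1, hcapmb⟩ : ∃ cap > 0, cap ≤ 1 ∧ cap ≤ mb / 16 :=
    ⟨min 1 (mb / 16), lt_min one_pos (by linarith), min_le_left _ _, min_le_right _ _⟩
  set T := descentStep g cap
  have hT : IsDescent Φ g T cap := isDescent_descentStep hΦ hg hodd hcap
  have hTc : ∀ n, Continuous (T^[n]) := fun n => hT.cont.iterate n
  -- a sign for every level, read off from the critical point that is visited
  obtain ⟨sg, hsg⟩ := exists_sign H
  let V : ℕ → H → H → Prop := fun i x p => g p = 0 ∧ Φ p = c i ∧ Visits Φ T (c i) η (mb / 8) x p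
  have hVuniq : ∀ i x p q, V i x p → V i x q → p = q := by
    rintro i x p q ⟨hp1, hp2, hp3⟩ ⟨hq1, hq2, hq3⟩
    exact hT.visit_unique hcap1 hmb hcapmb hcl hδ hclδ hη hηδ (by linarith [hca i])
      (by linarith [hβc i]) hp1 hq1 hp2 hq2 ((hK p hp1).trans (le_max_left _ _))
      ((hK q hq1).trans (le_max_left _ _)) hp3 hq3
  have hVneg : ∀ i x p, V i x p → V i (-x) (-p) := by
    rintro i x p ⟨hp1, hp2, n, hn, hn'⟩
    refine ⟨by rw [hodd, hp1, neg_zero], by rw [heven, hp2], n, ?_, ?_⟩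
    · rw [hT.iterate_neg, neg_sub_neg, norm_sub_rev]; exact hn
    · rw [hT.iterate_neg, heven]; exact hn'
  have hVne : ∀ i x p, V i x p → p ≠ 0 := by
    rintro i x p ⟨-, hp2, -⟩ rfl
    linarith [hca i]
  let s : ℕ → H → ZMod 2 := fun i x => if h : ∃ p, V i x p then sg h.choose else sg x
  have hsV : ∀ i x p, V i x p → s i x = sg p := by
    intro i x p hp
    have hex : ∃ p, V i x p := ⟨p, hp⟩
    simp only [s, dif_pos hex]
    rw [hVuniq i x _ _ hex.choose_spec hp]
  -- `χ` tells on which side of the sphere a trajectory drops below the level `a`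
  let χ : H → ZMod 2 := fun x => if x ∈ F ∧ FallsInside Φ T a r x then 1 else 0
  have hfall : ∀ x ∈ F, ∀ n, Φ (T^[n] x) < a → χ x = if ‖T^[n] x‖ < r then 1 else 0 := by
    intro x hx n hn
    simp only [χ, hx, true_and, hT.fallsInside_iff hsph hn]
  have hopen : ∀ x n, Φ (T^[n] x) < a → ∀ᶠ y in 𝓝 x, Φ (T^[n] y) < a := fun x n h =>
    (hΦc.comp (hTc n)).continuousAt.eventually_lt continuousAt_const h
  refine no_symmetric_cover he L χ s (R := R) (by linarith) ?_ ?_ ?_ ?_ ?_ ?_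
  · intro x
    have : FallsInside Φ T a r (-x) ↔ FallsInside Φ T a r x := by
      simp only [FallsInside, hT.iterate_neg, heven, norm_neg]
    simp only [χ, neg_mem_iff, this]
  · intro i x hx
    by_cases h : ∃ p, V i x p
    · obtain ⟨p, hp⟩ := h
      rw [hsV i x p hp, hsV i (-x) (-p) (hVneg i x p hp), hsg p (hVne i x p hp)]
    · have h' : ¬ ∃ p, V i (-x) p := fun ⟨p, hp⟩ => h ⟨-p, by simpa using hVneg i _ _ hp⟩
      simp only [s, dif_neg h, dif_neg h']
      exact hsg x hx
  · rw [hfall 0 F.zero_mem 0 (by simpa [h0] using ha)]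
    simp [hr]
  · intro x hx
    by_cases hxF : x ∈ F
    · rw [hfall x hxF 0 (hR x hxF hx)]
      rw [if_neg]
      simp only [Function.iterate_zero, id]
      linarith
    · simp [χ, hxF]
  · have h1 := hopen 0 0 (by simpa [h0] using ha)
    have h2 : ∀ᶠ y in 𝓝 (0 : H), ‖y‖ < r :=
      continuous_norm.continuousAt.eventually_lt continuousAt_const (by simpa using hr)
    filter_upwards [h1, h2] with y hy1 hy2 hyF
    rw [hfall y hyF 0 hy1]
    simp [hy2]
  · intro x hxF
    by_cases hx : ∃ n, Φ (T^[n] x) < a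
    · left
      obtain ⟨n, hn⟩ := hx
      have hne : ‖T^[n] x‖ ≠ r := fun h => absurd (hsph _ h) (not_le.2 hn)
      have hnc : ContinuousAt (fun y => ‖T^[n] y‖) x := (hTc n).norm.continuousAt
      rcases lt_or_gt_of_ne hne with h | h
      · filter_upwards [hopen x n hn, hnc.eventually_lt continuousAt_const h] with y hy1 hy2 hyF
        rw [hfall y hyF n hy1, hfall x hxF n hn, if_pos h, if_pos hy2]
      · filter_upwards [hopen x n hn, continuousAt_const.eventually_lt hnc h] with y hy1 hy2 hyF
        rw [hfall y hyF n hy1, hfall x hxF n hn, if_neg (not_lt.2 h.le), if_neg (not_lt.2 hy2.le)]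
    · right
      push Not at hx
      -- the trajectory converges to a critical point
      have hstep : ∀ n, T^[n + 1] x = T (T^[n] x) := fun n => Function.iterate_succ_apply' _ _ _
      have hcau := hT.cauchySeq (x := fun n => T^[n] x) hcap1 hmb hcapmb hcl hstep
        (fun n => ha.le.trans (hx n)) (hβF x hxF)
      obtain ⟨p, hp⟩ := cauchySeq_tendsto_of_complete hcau
      have hTp : T p = p := by
        have h1 := (hT.cont.tendsto p).comp hp
        have h2 := hp.comp (tendsto_add_atTop_nat 1)
        refine tendsto_nhds_unique h1 (h2.congr fun n => ?_)
        simp only [Function.comp_apply, hstep]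
      have hgp := hT.crit p hTp
      have hΦp := (hΦc.tendsto p).comp hp
      have hpa : a ≤ Φ p := ge_of_tendsto' hΦp hx
      obtain ⟨i, hi, hci⟩ := hcsurj (Φ p) (Finset.mem_filter.2
        ⟨hfin.mem_toFinset.2 ⟨p, hgp, rfl⟩, hpa⟩)
      have hdist : Tendsto (fun n => ‖T^[n] x - p‖) atTop (𝓝 0) :=
        tendsto_iff_norm_sub_tendsto_zero.1 hp
      have hlev : Tendsto (fun n => |Φ (T^[n] x) - c i|) atTop (𝓝 0) := by
        have := (hΦp.sub_const (Φ p)).abs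
        simpa [hci] using this
      obtain ⟨n, hn1, hn2⟩ := ((hdist.eventually_lt_const (show (0 : ℝ) < mb / 8 by linarith)).and
        (hlev.eventually_lt_const hη)).exists
      refine ⟨i, hi, ?_⟩
      have hc1 : ContinuousAt (fun y => ‖T^[n] y - p‖) x :=
        ((hTc n).sub continuous_const).norm.continuousAt
      have hc2 : ContinuousAt (fun y => |Φ (T^[n] y) - c i|) x :=
        ((hΦc.comp (hTc n)).sub continuous_const).abs.continuousAt
      filter_upwards [hc1.eventually_lt continuousAt_const hn1,
        hc2.eventually_lt continuousAt_const hn2] with y hy1 hy2 _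
      rw [hsV i y p ⟨hgp, hci.symm, n, hy1, hy2⟩, hsV i x p ⟨hgp, hci.symm, n, hn1, hn2⟩]

end Minimax

/-! ### Weak sequential compactness -/

section WeakCompactness

variable {W : Type*} [NormedAddCommGroup W] [NormedSpace ℝ W]

/-- In a reflexive space, bounded sequences converge weakly along ultrafilters. -/
lemma exists_weak_ultralimit
    (hrefl : Function.Surjective ⇑(NormedSpace.inclusionInDoubleDual ℝ W)) {y : ℕ → W} {B : ℝ}
    (hB : ∀ n, ‖y n‖ ≤ B) (U : Ultrafilter ℕ) :
    ∃ x : W, ∀ f : W →L[ℝ] ℝ, Tendsto (fun n => f (y n)) U (𝓝 (f x)) := by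
  have hlim : ∀ f : W →L[ℝ] ℝ, ∃ l, |l| ≤ B * ‖f‖ ∧ Tendsto (fun n => f (y n)) U (𝓝 l) := by
    intro f
    have hmem : ∀ n, f (y n) ∈ Icc (-(B * ‖f‖)) (B * ‖f‖) := by
      intro n
      refine abs_le.1 ?_
      calc |f (y n)| ≤ ‖f‖ * ‖y n‖ := f.le_opNorm _
        _ ≤ B * ‖f‖ := by rw [mul_comm]; gcongr; exact hB n
    obtain ⟨l, hl, hle⟩ := isCompact_Icc.ultrafilter_le_nhds (U.map fun n => f (y n))
      (by
        rw [le_principal_iff]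
        exact Filter.mem_map.2 (Filter.univ_mem' hmem))
    exact ⟨l, abs_le.2 hl, hle⟩
  choose l hl1 hl2 using hlim
  let Λ : (W →L[ℝ] ℝ) →ₗ[ℝ] ℝ :=
    { toFun := l
      map_add' := fun f h => tendsto_nhds_unique (hl2 (f + h)) ((hl2 f).add (hl2 h))
      map_smul' := fun t f => tendsto_nhds_unique (hl2 (t • f)) ((hl2 f).const_mul t) }
  obtain ⟨x, hx⟩ := hrefl (Λ.mkContinuous B hl1)
  refine ⟨x, fun f => ?_⟩
  have : f x = l f := by
    rw [← NormedSpace.dual_def ℝ W x f, hx]; rfl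
  rw [this]
  exact hl2 f

/-- Countably many functionals separate the points of the closed span of a sequence, so a
diagonal argument singles out one weak limit. -/
theorem exists_weakly_convergent_subseq
    (hrefl : Function.Surjective ⇑(NormedSpace.inclusionInDoubleDual ℝ W)) {y : ℕ → W} {B : ℝ}
    (hB : ∀ n, ‖y n‖ ≤ B) :
    ∃ (x : W) (φ : ℕ → ℕ), StrictMono φ ∧
      ∀ f : W →L[ℝ] ℝ, Tendsto (fun n => f (y (φ n))) atTop (𝓝 (f x)) := by
  set S : Submodule ℝ W := (Submodule.span ℝ (range y)).topologicalClosure with hS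
  have hsep : TopologicalSpace.IsSeparable (S : Set W) := by
    rw [hS, Submodule.topologicalClosure_coe]
    exact ((countable_range y).isSeparable.span (R := ℝ)).closure
  obtain ⟨D, hD, hSD⟩ := hsep
  have hDne : D.Nonempty := by
    rw [← closure_nonempty_iff]; exact ⟨0, hSD S.zero_mem⟩
  obtain ⟨z, rfl⟩ := hD.exists_eq_range hDne
  choose f hf1 hf2 using fun k => exists_dual_vector'' ℝ (z k)
  have hinj : ∀ x ∈ S, (∀ k, f k x = 0) → x = 0 := by
    intro x hx h0
    by_contra hne
    have hpos : 0 < ‖x‖ := norm_pos_iff.2 hne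
    obtain ⟨_, ⟨k, rfl⟩, hk⟩ := Metric.mem_closure_iff.1 (hSD hx) (‖x‖ / 2) (by linarith)
    rw [dist_eq_norm] at hk
    have h1 : ‖z k‖ ≤ ‖z k - x‖ := by
      have h2 : f k (z k - x) = ‖z k‖ := by rw [map_sub, h0, sub_zero, hf2]; rfl
      have h3 := (f k).le_of_opNorm_le (hf1 k) (z k - x)
      rw [h2, one_mul, norm_norm] at h3
      exact h3
    rw [norm_sub_rev] at h1
    linarith [norm_le_norm_add_norm_sub' x (z k)]
  have hcpt : IsCompact (Set.pi univ fun _ : ℕ => Icc (-B) B) :=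
    isCompact_univ_pi fun _ => isCompact_Icc
  obtain ⟨c, -, φ, hφ, hc⟩ := hcpt.isSeqCompact (x := fun n k => f k (y n)) (by
    intro n k _
    refine abs_le.1 ?_
    calc |f k (y n)| ≤ 1 * ‖y n‖ := (f k).le_of_opNorm_le (hf1 k) _
      _ ≤ B := by rw [one_mul]; exact hB n)
  rw [tendsto_pi_nhds] at hc
  -- every ultrafilter limit lies in the closed span and is determined by the limits `c k`
  have hul : ∀ U : Ultrafilter ℕ, (U : Filter ℕ) ≤ atTop → ∃ x ∈ S, (∀ k, f k x = c k) ∧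
      ∀ h : W →L[ℝ] ℝ, Tendsto (fun n => h (y (φ n))) U (𝓝 (h x)) := by
    intro U hU
    obtain ⟨x, hx⟩ := exists_weak_ultralimit hrefl (y := fun n => y (φ n)) (fun n => hB _) U
    refine ⟨x, ?_, fun k => tendsto_nhds_unique (hx (f k)) ((hc k).mono_left hU), hx⟩
    by_contra hxS
    obtain ⟨h, u, hu1, hu2⟩ := geometric_hahn_banach_closed_point S.convex
      (Submodule.isClosed_topologicalClosure _) hxS
    have : h x ≤ u := le_of_tendsto' (hx h) fun n =>
      (hu1 _ (Submodule.le_topologicalClosure _ (Submodule.subset_span ⟨φ n, rfl⟩))).le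
    linarith
  obtain ⟨U₀, hU₀⟩ := Ultrafilter.exists_le (atTop : Filter ℕ)
  obtain ⟨x, hxS, hxc, -⟩ := hul U₀ hU₀
  refine ⟨x, φ, hφ, fun h => ?_⟩
  rw [tendsto_iff_ultrafilter]
  intro U hU
  obtain ⟨x', hxS', hxc', hx'⟩ := hul U hU
  have : x' - x = 0 := hinj _ (S.sub_mem hxS' hxS) fun k => by rw [map_sub, hxc, hxc', sub_self]
  rw [← sub_eq_zero.1 this]
  exact hx' h

end WeakCompactness

/-! ### The reduced functional -/

section Reduction

variable {H W : Type*} [NormedAddCommGroup H] [NormedAddCommGroup W]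

/-- Coercivity on fibres: over bounded sets, sublevel sets of `I` are bounded. -/
lemma exists_fibre_bound {I nrm : H × W → ℝ}
    (hnrm : ∀ u, nrm u = Real.sqrt (‖u.1‖ ^ 2 + ‖u.2‖ ^ 2))
    (hI4 : ∀ u : ℕ → H × W, Tendsto (fun n => nrm (u n)) atTop atTop →
      Tendsto (fun n => ‖(u n).1‖ + I (u n)) atTop atTop) (C : ℝ) :
    ∃ B, ∀ u : H × W, ‖u.1‖ + I u ≤ C → ‖u.2‖ ≤ B := by
  by_contra! hcon
  choose u hu1 hu2 using fun n : ℕ => hcon n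
  have h1 : Tendsto (fun n => nrm (u n)) atTop atTop := by
    refine tendsto_atTop_mono (fun n => ?_) tendsto_natCast_atTop_atTop
    rw [hnrm]
    refine (hu2 n).le.trans (Real.le_sqrt_of_sq_le ?_)
    linarith [sq_nonneg ‖(u n).1‖]
  obtain ⟨n, hn⟩ := ((hI4 u h1).eventually_gt_atTop C).exists
  linarith [hu1 n]

variable [NormedSpace ℝ W]

/-- A fibrewise minimizer depends continuously on the base point: along a convergent sequence of
base points the minimizers are bounded, and a weak limit of them is again a minimizer. -/
lemma continuous_minimizer
    (hrefl : Function.Surjective ⇑(NormedSpace.inclusionInDoubleDual ℝ W))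
    {I : H × W → ℝ} (hI : Continuous I) (hI1 : ∀ u, 0 ≤ I u)
    (hI2 : ∀ (u : ℕ → H × W) (u₀ : H × W),
      Tendsto (fun n => (u n).1) atTop (𝓝 u₀.1) →
      (∀ f : W →L[ℝ] ℝ, Tendsto (fun n => f (u n).2) atTop (𝓝 (f u₀.2))) →
      I u₀ ≤ liminf (fun n => I (u n)) atTop)
    (hI3 : ∀ (u : ℕ → H × W) (u₀ : H × W),
      Tendsto (fun n => (u n).1) atTop (𝓝 u₀.1) →
      (∀ f : W →L[ℝ] ℝ, Tendsto (fun n => f (u n).2) atTop (𝓝 (f u₀.2))) →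
      Tendsto (fun n => I (u n)) atTop (𝓝 (I u₀)) →
      Tendsto u atTop (𝓝 u₀))
    (hbd : ∀ C, ∃ B, ∀ u : H × W, ‖u.1‖ + I u ≤ C → ‖u.2‖ ≤ B)
    {m : H → H × W} (hm1 : ∀ v, (m v).1 = v) (hmin : ∀ v w, I (m v) ≤ I (v, w))
    (huniq : ∀ v w, I (v, w) ≤ I (m v) → (v, w) = m v) : Continuous m := by
  rw [continuous_iff_seqContinuous]
  intro v v₀ hv
  apply tendsto_of_subseq_tendsto
  intro ns hns
  have hv' : Tendsto (fun n => v (ns n)) atTop (𝓝 v₀) := hv.comp hns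
  have hmaj : Tendsto (fun n => I (v (ns n), (m v₀).2)) atTop (𝓝 (I (m v₀))) := by
    have h1 : Tendsto (fun n => (v (ns n), (m v₀).2)) atTop (𝓝 (v₀, (m v₀).2)) :=
      hv'.prodMk_nhds tendsto_const_nhds
    have h2 : (v₀, (m v₀).2) = m v₀ := by
      ext <;> simp [hm1]
    rw [h2] at h1
    exact (hI.tendsto _).comp h1
  obtain ⟨C, hC⟩ := (hv'.norm.add hmaj).bddAbove_range
  obtain ⟨B, hB⟩ := hbd C
  have hB' : ∀ n, ‖(m (v (ns n))).2‖ ≤ B := fun n => hB _ (by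
    rw [hm1]
    exact (add_le_add_right (hmin _ (m v₀).2) _).trans (hC ⟨n, rfl⟩))
  obtain ⟨w, φ, hφ, hw⟩ := exists_weakly_convergent_subseq hrefl hB'
  refine ⟨φ, ?_⟩
  have ht1 : Tendsto (fun n => (m (v (ns (φ n)))).1) atTop (𝓝 ((v₀, w) : H × W).1) := by
    simp only [hm1]
    exact hv'.comp hφ.tendsto_atTop
  have hmajφ := hmaj.comp hφ.tendsto_atTop
  have hle : ∀ n, I (m (v (ns (φ n)))) ≤ I (v (ns (φ n)), (m v₀).2) := fun n => hmin _ _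
  have hbb : IsBoundedUnder (· ≥ ·) atTop fun n => I (m (v (ns (φ n)))) :=
    isBoundedUnder_of ⟨0, fun n => hI1 _⟩
  have hba : IsBoundedUnder (· ≤ ·) atTop fun n => I (m (v (ns (φ n)))) :=
    hmajφ.isBoundedUnder_le.mono_le (Eventually.of_forall hle)
  have hlim := hI2 (fun n => m (v (ns (φ n)))) (v₀, w) ht1 hw
  have hsup : limsup (fun n => I (m (v (ns (φ n))))) atTop ≤ I (m v₀) := by
    rw [← hmajφ.limsup_eq]
    exact limsup_le_limsup (Eventually.of_forall hle) hbb.isCoboundedUnder_le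
      hmajφ.isBoundedUnder_le
  have heq : (v₀, w) = m v₀ := huniq v₀ w ((hlim.trans (liminf_le_limsup hba hbb)).trans hsup)
  rw [← heq] at hsup ⊢
  exact hI3 _ _ ht1 hw (tendsto_of_le_liminf_of_limsup_le hlim hsup hba hbb)

/-- Envelope theorem: the minimum over the fibres is differentiable, with the partial derivative
of `I` at the minimizer as derivative. -/
lemma hasFDerivAt_minimum [NormedSpace ℝ H] {I : H × W → ℝ} (hI : ContDiff ℝ 1 I)
    {m : H → H × W} (hm : Continuous m) (hm1 : ∀ v, (m v).1 = v)
    (hmin : ∀ v w, I (m v) ≤ I (v, w)) (v : H) :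
    HasFDerivAt (fun x => I (m x))
      ((fderiv ℝ I (m v)).comp (ContinuousLinearMap.inl ℝ H W)) v := by
  have hst := (hI.contDiffAt (x := m v)).hasStrictFDerivAt one_ne_zero
  have hmv : ∀ x, (x, (m x).2) = m x := fun x => by ext <;> simp [hm1]
  have ho := hst.isLittleO
  apply HasFDerivAt.of_isLittleO
  rw [Asymptotics.isLittleO_iff] at ho ⊢
  intro ε hε
  have ho := ho hε
  have hc1 : Tendsto (fun x : H => ((x, (m v).2), (v, (m v).2))) (𝓝 v) (𝓝 (m v, m v)) := by
    have : Continuous fun x : H => ((x, (m v).2), (v, (m v).2)) := by fun_prop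
    convert this.tendsto v using 3 <;> exact (hmv v).symm
  have hc2 : Tendsto (fun x : H => ((x, (m x).2), (v, (m x).2))) (𝓝 v) (𝓝 (m v, m v)) := by
    have : Continuous fun x : H => ((x, (m x).2), (v, (m x).2)) := by fun_prop
    convert this.tendsto v using 3 <;> exact (hmv v).symm
  filter_upwards [hc1.eventually ho, hc2.eventually ho] with x h1 h2
  simp only [Prod.mk_sub_mk, sub_self, Prod.norm_mk, norm_zero, norm_nonneg, sup_of_le_left,
    Real.norm_eq_abs] at h1 h2
  simp only [ContinuousLinearMap.comp_apply, ContinuousLinearMap.inl_apply, Real.norm_eq_abs]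
  rw [hmv v] at h1
  rw [hmv x] at h2
  have h3 := hmin x (m v).2
  have h4 := hmin v (m x).2
  rw [abs_le] at h1 h2 ⊢
  constructor
  · linarith [h2.1]
  · linarith [h1.2]

/-- Either infinitely many classes of an equivalence relation meet `C`, or finitely many
representatives suffice. -/
lemma exists_seq_or_finset {X : Type*} (r : Setoid X) (C : Set X) :
    (∃ u : ℕ → X, (∀ n, u n ∈ C) ∧ ∀ i j, i ≠ j → ¬ r (u i) (u j)) ∨
      ∃ s : Finset X, ∀ x ∈ C, ∃ y ∈ s, r y x := by
  classical
  let q : Setoid C := r.comap Subtype.val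
  rcases finite_or_infinite (Quotient q) with h | h
  · right
    have := Fintype.ofFinite (Quotient q)
    refine ⟨Finset.univ.image fun c : Quotient q => (c.out : X), fun x hx => ?_⟩
    refine ⟨((⟦⟨x, hx⟩⟧ : Quotient q).out : X), Finset.mem_image_of_mem _ (Finset.mem_univ _), ?_⟩
    exact Quotient.mk_out (s := q) ⟨x, hx⟩
  · left
    let ι := Infinite.natEmbedding (Quotient q)
    refine ⟨fun n => ((ι n).out : X), fun n => (ι n).out.2, fun i j hij hr => hij ?_⟩
    apply ι.injective
    have : (⟦(ι i).out⟧ : Quotient q) = ⟦(ι j).out⟧ := Quotient.sound hr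
    rwa [Quotient.out_eq, Quotient.out_eq] at this

/-- On a finite-dimensional subspace the reduced functional is eventually below any positive
level. -/
lemma far_below [NormedSpace ℝ H] {I : H × W → ℝ} {m : H → H × W} (hm1 : ∀ v, (m v).1 = v)
    (hI7 : ∀ (t : ℕ → ℝ) (u : ℕ → H × W) (v : H), Tendsto t atTop atTop →
      Tendsto (fun n => (u n).1) atTop (𝓝 v) → v ≠ 0 →
      Tendsto (fun n => I (t n • u n) / (t n) ^ 2) atTop atTop) {a : ℝ} (ha : 0 < a)
    (F : Submodule ℝ H) [FiniteDimensional ℝ F] :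
    ∃ R, ∀ x ∈ F, R ≤ ‖x‖ → 1 / 2 * ‖x‖ ^ 2 - I (m x) < a := by
  by_contra! hcon
  choose x hxF hx1 hx2 using fun n : ℕ => hcon (n + 1)
  have hpos : ∀ n, 0 < ‖x n‖ := fun n => lt_of_lt_of_le (by positivity) (hx1 n)
  have hcpt : IsCompact (Metric.sphere (0 : F) 1) := isCompact_sphere _ _
  obtain ⟨v, hv, φ, hφ, hlim⟩ := hcpt.isSeqCompact
    (x := fun n => (‖x n‖⁻¹ • (⟨x n, hxF n⟩ : F))) (fun n => by
      rw [mem_sphere_zero_iff_norm, norm_smul, norm_inv, norm_norm]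
      exact inv_mul_cancel₀ (hpos n).ne')
  have ht : Tendsto (fun n => ‖x (φ n)‖) atTop atTop := by
    have h1 : Tendsto (fun n => ‖x n‖) atTop atTop :=
      tendsto_atTop_mono (fun n : ℕ => (lt_of_lt_of_le (lt_add_one (n : ℝ)) (hx1 n)).le)
        tendsto_natCast_atTop_atTop
    exact h1.comp hφ.tendsto_atTop
  have hu : Tendsto (fun n => (‖x (φ n)‖⁻¹ • m (x (φ n))).1) atTop (𝓝 (v : H)) := by
    simp only [Prod.smul_fst, hm1]
    exact (continuous_subtype_val.tendsto v).comp hlim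
  have hv0 : (v : H) ≠ 0 := by
    intro h
    have h1 : ‖(v : H)‖ = 1 := mem_sphere_zero_iff_norm.1 hv
    rw [h, norm_zero] at h1
    exact zero_ne_one h1
  obtain ⟨n, hn⟩ := ((hI7 _ _ _ ht hu hv0).eventually_gt_atTop (1 / 2)).exists
  rw [smul_inv_smul₀ (hpos _).ne', lt_div_iff₀ (by have := hpos (φ n); positivity)] at hn
  linarith [hx2 (φ n)]

end Reduction

/-- The sequential form of the clustering condition implies the uniform one. -/
lemma exists_clustersAt {H : Type*} [NormedAddCommGroup H] {Φ : H → ℝ} {g : H → H} {β mb : ℝ}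
    (hM : ∀ v w : ℕ → H,
      0 ≤ liminf (fun n => Φ (v n)) atTop → limsup (fun n => Φ (v n)) atTop ≤ β →
      Tendsto (fun n => (1 + ‖v n‖) * ‖g (v n)‖) atTop (𝓝 0) →
      0 ≤ liminf (fun n => Φ (w n)) atTop → limsup (fun n => Φ (w n)) atTop ≤ β →
      Tendsto (fun n => (1 + ‖w n‖) * ‖g (w n)‖) atTop (𝓝 0) →
      (∀ᶠ n in atTop, ‖v n - w n‖ < mb) → liminf (fun n => ‖v n - w n‖) atTop = 0)
    {ε : ℝ} (hε : 0 < ε) : ∃ δ > 0, ClustersAt Φ g β mb ε δ := by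
  by_contra! hcon
  have hcon' : ∀ n : ℕ, ∃ v w, NearCrit Φ g β (1 / ((n : ℝ) + 1)) v ∧
      NearCrit Φ g β (1 / ((n : ℝ) + 1)) w ∧ ‖v - w‖ < mb ∧ ε ≤ ‖v - w‖ := fun n => by
    have := hcon (1 / ((n : ℝ) + 1)) (by positivity)
    unfold ClustersAt at this
    push Not at this
    exact this
  choose v w hv hw hlt hge using hcon'
  have key : ∀ x : ℕ → H, (∀ n : ℕ, NearCrit Φ g β (1 / ((n : ℝ) + 1)) (x n)) →
      0 ≤ liminf (fun n => Φ (x n)) atTop ∧ limsup (fun n => Φ (x n)) atTop ≤ β ∧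
      Tendsto (fun n => (1 + ‖x n‖) * ‖g (x n)‖) atTop (𝓝 0) := by
    intro x hx
    have hba : IsBoundedUnder (· ≤ ·) atTop fun n => Φ (x n) :=
      isBoundedUnder_of ⟨β, fun n => (hx n).2.1⟩
    have hbb : IsBoundedUnder (· ≥ ·) atTop fun n => Φ (x n) :=
      isBoundedUnder_of ⟨0, fun n => (hx n).1⟩
    refine ⟨le_liminf_of_le hba.isCoboundedUnder_ge (Eventually.of_forall fun n => (hx n).1),
      limsup_le_of_le hbb.isCoboundedUnder_le (Eventually.of_forall fun n => (hx n).2.1), ?_⟩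
    exact squeeze_zero (fun _ => by positivity) (fun n => (hx n).2.2.le)
      tendsto_one_div_add_atTop_nhds_zero_nat
  obtain ⟨hv1, hv2, hv3⟩ := key v hv
  obtain ⟨hw1, hw2, hw3⟩ := key w hw
  have h0 := hM v w hv1 hv2 hv3 hw1 hw2 hw3 (Eventually.of_forall hlt)
  have hb : IsBoundedUnder (· ≤ ·) atTop fun n => ‖v n - w n‖ :=
    isBoundedUnder_of ⟨mb, fun n => (hlt n).le⟩
  have h1 : ε ≤ liminf (fun n => ‖v n - w n‖) atTop :=
    le_liminf_of_le hb.isCoboundedUnder_ge (Eventually.of_forall hge)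
  linarith

end CritOrbits

/-! ### Critical orbits -/

/-- Theorem `Th:CrticMulti (b)`: under (I1)–(I8), with `dim X⁺ = ∞`, `J` even, a group
`G` acting on `X` by isometries as in (G), and the Cerami-type condition `(M)_0^β` for
every `β > 0`, the functional `J` has infinitely many geometrically distinct critical
orbits: there is a sequence `(u_n)` of critical points of `J` whose `G`-orbits are
pairwise disjoint.  The space `X = X⁺ ⊕ X̃` with `‖u‖² = ‖u⁺‖² + ‖ũ‖²` is modelled as
the product `H × W` of the Hilbert space `H = X⁺` and the reflexive Banach space
`W = X̃`, and `J̃ := J ∘ m : X⁺ → ℝ` is the reduced functional. -/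
theorem infinitely_many_critical_orbits
    {H W : Type*} [NormedAddCommGroup H] [InnerProductSpace ℝ H] [CompleteSpace H]
    [NormedAddCommGroup W] [NormedSpace ℝ W] [CompleteSpace W]
    -- `W` is reflexive
    (hrefl : Function.Surjective ⇑(NormedSpace.inclusionInDoubleDual ℝ W))
    (I : H × W → ℝ) (hI : ContDiff ℝ 1 I)
    (J : H × W → ℝ) (hJ : ∀ u, J u = (1/2) * ‖u.1‖ ^ 2 - I u)
    (nrm : H × W → ℝ) (hnrm : ∀ u, nrm u = Real.sqrt (‖u.1‖ ^ 2 + ‖u.2‖ ^ 2))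
    (Mset : Set (H × W)) (hMset : Mset = {u | ∀ w : W, fderiv ℝ I u (0, w) = 0})
    -- (I1)
    (hI1 : I 0 = 0 ∧ ∀ u, 0 ≤ I u)
    -- (I2): 𝒯-sequential lower semicontinuity
    (hI2 : ∀ (u : ℕ → H × W) (u₀ : H × W),
      Tendsto (fun n => (u n).1) atTop (𝓝 u₀.1) →
      (∀ f : W →L[ℝ] ℝ, Tendsto (fun n => f (u n).2) atTop (𝓝 (f u₀.2))) →
      I u₀ ≤ liminf (fun n => I (u n)) atTop)
    -- (I3)
    (hI3 : ∀ (u : ℕ → H × W) (u₀ : H × W),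
      Tendsto (fun n => (u n).1) atTop (𝓝 u₀.1) →
      (∀ f : W →L[ℝ] ℝ, Tendsto (fun n => f (u n).2) atTop (𝓝 (f u₀.2))) →
      Tendsto (fun n => I (u n)) atTop (𝓝 (I u₀)) →
      Tendsto u atTop (𝓝 u₀))
    -- (I4): `‖u⁺‖ + I(u) → ∞` as `‖u‖ → ∞`
    (hI4 : ∀ u : ℕ → H × W, Tendsto (fun n => nrm (u n)) atTop atTop →
      Tendsto (fun n => ‖(u n).1‖ + I (u n)) atTop atTop)
    -- (I5)
    (hI5 : ∀ u ∈ Mset, ∀ w : W, w ≠ 0 → I u < I (u.1, u.2 + w))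
    (r a : ℝ) (hr : 0 < r)
    -- (I6)
    (ha : a = sInf {y | ∃ v : H, ‖v‖ = r ∧ y = J (v, 0)}) (hI6 : 0 < a)
    -- (I7)
    (hI7 : ∀ (t : ℕ → ℝ) (u : ℕ → H × W) (v : H), Tendsto t atTop atTop →
      Tendsto (fun n => (u n).1) atTop (𝓝 v) → v ≠ 0 →
      Tendsto (fun n => I (t n • u n) / (t n) ^ 2) atTop atTop)
    -- the Nehari–Pankov set `N = {u ∈ M \ X̃ : J'(u)[u] = 0}`
    (Nset : Set (H × W))
    (hNset : Nset = {u | u ∈ Mset ∧ u.1 ≠ 0 ∧ fderiv ℝ J u u = 0})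
    -- (I8)
    (hI8 : ∀ u ∈ Nset, ∀ t : ℝ, 0 ≤ t → ∀ v : W,
      ((t ^ 2 - 1) / 2) * fderiv ℝ I u u + t * fderiv ℝ I u (0, v) + I u
        - I (t • u + (0, v)) ≤ 0)
    -- the reduction map `m : X⁺ → M`, `m(v)` being the unique point of `M` over `v`
    (m : H → H × W)
    (hm : ∀ v : H, (m v).1 = v ∧ m v ∈ Mset ∧ ∀ u ∈ Mset, u.1 = v → u = m v)
    -- the mountain-pass level over paths in `M`
    -- `dim X⁺ = ∞`
    (hdim : ¬ FiniteDimensional ℝ H)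
    -- `J` is even
    (heven : ∀ u : H × W, J (-u) = J u)
    -- (G): a group `G` acts on `X` by linear isometries, leaving `X⁺`, `X̃` and `J`
    -- invariant, and the action is discrete
    {G : Type*} [Group G] (σ : G →* (H × W) ≃ₗ[ℝ] (H × W))
    (hisom : ∀ (g : G) (u : H × W), nrm (σ g u) = nrm u)
    (hplus : ∀ (g : G) (v : H), (σ g (v, 0)).2 = 0)
    (htilde : ∀ (g : G) (w : W), (σ g ((0 : H), w)).1 = 0)
    (hJinv : ∀ (g : G) (u : H × W), J (σ g u) = J u)
    (hdiscrete : ∀ u : H × W, u ≠ 0 →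
      ∃ ε > 0, ∀ g : G, σ g u ≠ u → ε ≤ nrm (σ g u - u))
    -- (M)_0^β (a) for every β > 0: bounds on Cerami-type sequences of `J̃ = J ∘ m`
    (hMa : ∀ β : ℝ, 0 < β → ∃ Mb : ℝ, ∀ v : ℕ → H,
      0 ≤ liminf (fun n => J (m (v n))) atTop →
      limsup (fun n => J (m (v n))) atTop ≤ β →
      Tendsto (fun n => (1 + ‖v n‖) * ‖fderiv ℝ (fun x => J (m x)) (v n)‖) atTop (𝓝 0) →
      limsup (fun n => ‖v n‖) atTop ≤ Mb)
    -- (M)_0^β (b) for every β > 0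
    (hMb : ∀ β : ℝ, 0 < β →
      (∃ s : Finset H,
        {v : H | fderiv ℝ (fun x => J (m x)) v = 0 ∧ 0 ≤ J (m v) ∧ J (m v) ≤ β} ⊆
          ⋃ v ∈ s, {v' | ∃ g : G, (σ g (v, 0)).1 = v'}) →
      ∃ mb > 0, ∀ v w : ℕ → H,
        0 ≤ liminf (fun n => J (m (v n))) atTop →
        limsup (fun n => J (m (v n))) atTop ≤ β →
        Tendsto (fun n => (1 + ‖v n‖) * ‖fderiv ℝ (fun x => J (m x)) (v n)‖) atTop (𝓝 0) →
        0 ≤ liminf (fun n => J (m (w n))) atTop →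
        limsup (fun n => J (m (w n))) atTop ≤ β →
        Tendsto (fun n => (1 + ‖w n‖) * ‖fderiv ℝ (fun x => J (m x)) (w n)‖) atTop (𝓝 0) →
        (∀ᶠ n in atTop, ‖v n - w n‖ < mb) →
        liminf (fun n => ‖v n - w n‖) atTop = 0)
    (cM : ℝ)
    (hcM : cM = sInf {c | ∃ γ : ℝ → H × W, ContinuousOn γ (Icc 0 1) ∧
      (∀ s ∈ Icc (0:ℝ) 1, γ s ∈ Mset) ∧ γ 0 = 0 ∧ r < ‖(γ 1).1‖ ∧ J (γ 1) < 0 ∧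
      c = sSup (J '' (γ '' Icc (0:ℝ) 1))}) :
    ∃ u : ℕ → H × W,
      (∀ n, fderiv ℝ J (u n) = 0) ∧
      (∀ i j : ℕ, i ≠ j →
        Disjoint {x | ∃ g : G, σ g (u i) = x} {x | ∃ g : G, σ g (u j) = x}) := by
  classical
  -- `m v` is the strict minimizer of `I` over the fibre `v + X̃`.
  have hm1 : ∀ v, (m v).1 = v := fun v => (hm v).1
  have hmv : ∀ v, (v, (m v).2) = m v := fun v => by ext <;> simp [hm1]
  have hstrict : ∀ v w, w ≠ (m v).2 → I (m v) < I (v, w) := by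
    intro v w hw
    have h := hI5 (m v) (hm v).2.1 (w - (m v).2) (sub_ne_zero.2 hw)
    rwa [hm1, add_sub_cancel] at h
  have hmin : ∀ v w, I (m v) ≤ I (v, w) := by
    intro v w
    by_cases hw : w = (m v).2
    · rw [hw, hmv]
    · exact (hstrict v w hw).le
  have huniq : ∀ v w, I (v, w) ≤ I (m v) → (v, w) = m v := by
    intro v w h
    by_contra hne
    have hw : w ≠ (m v).2 := fun hw => hne (by rw [hw, hmv])
    exact (hstrict v w hw).not_ge h
  have hmc : Continuous m := CritOrbits.continuous_minimizer hrefl hI.continuous hI1.2 hI2 hI3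
    (CritOrbits.exists_fibre_bound hnrm hI4) hm1 hmin huniq
  -- `g` is the gradient of the reduced functional `J ∘ m`.
  let A : H → H →L[ℝ] ℝ := fun v => (fderiv ℝ I (m v)).comp (ContinuousLinearMap.inl ℝ H W)
  let g : H → H := fun v => v - (InnerProductSpace.toDual ℝ H).symm (A v)
  have hsq : ∀ v : H, HasFDerivAt (fun x : H => (1 / 2 : ℝ) * ‖x‖ ^ 2) (innerSL ℝ v) v := by
    intro v
    refine ((hasStrictFDerivAt_norm_sq v).hasFDerivAt.const_mul (1 / 2 : ℝ)).congr_fderiv ?_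
    ext h
    simp
  have hgA : ∀ v, innerSL ℝ (g v) = innerSL ℝ v - A v := by
    intro v
    ext h
    simp [g, InnerProductSpace.toDual_symm_apply]
  have hΦ : ∀ v, HasFDerivAt (fun x => J (m x)) (innerSL ℝ (g v)) v := by
    intro v
    have h := (hsq v).sub (CritOrbits.hasFDerivAt_minimum hI hmc hm1 hmin v)
    rw [hgA]
    refine h.congr_of_eventuallyEq (Eventually.of_forall fun x => ?_)
    simp only [hJ, hm1, Pi.sub_apply]
  have hgc : Continuous g := by
    have h1 : Continuous fun v => fderiv ℝ I (m v) := (hI.continuous_fderiv one_ne_zero).comp hmc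
    have h2 : Continuous A := h1.clm_comp continuous_const
    exact continuous_id.sub ((InnerProductSpace.toDual ℝ H).symm.continuous.comp h2)
  have hnorm : ∀ v, ‖fderiv ℝ (fun x => J (m x)) v‖ = ‖g v‖ := fun v => by
    rw [(hΦ v).fderiv, innerSL_apply_norm]
  have hIeven : ∀ u, I (-u) = I u := by
    intro u
    have h := heven u
    rw [hJ, hJ, Prod.fst_neg, norm_neg] at h
    linarith
  have hmeven : ∀ v, I (m (-v)) ≤ I (m v) := by
    intro v
    calc I (m (-v)) ≤ I (-v, -(m v).2) := hmin _ _
      _ = I (m v) := by rw [← Prod.neg_mk, hmv, hIeven]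
  have hΦeven : ∀ v, J (m (-v)) = J (m v) := by
    intro v
    have h := hmeven (-v)
    rw [neg_neg] at h
    rw [hJ, hJ, hm1, hm1, norm_neg, le_antisymm (hmeven v) h]
  have hΦ0 : J (m 0) = 0 := by
    have h1 : I (m 0) ≤ 0 := (hmin 0 0).trans_eq hI1.1
    rw [hJ, hm1, norm_zero, le_antisymm h1 (hI1.2 _)]
    norm_num
  have hsph : ∀ v : H, ‖v‖ = r → a ≤ J (m v) := by
    intro v hv
    have hbdd : BddBelow {y | ∃ v : H, ‖v‖ = r ∧ y = J (v, 0)} := by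
      -- otherwise the infimum takes its junk value `0`
      by_contra hb
      rw [ha, Real.sInf_of_not_bddBelow hb] at hI6
      exact lt_irrefl _ hI6
    have h1 : a ≤ J (v, 0) := ha.trans_le (csInf_le hbdd ⟨v, hv, rfl⟩)
    refine h1.trans ?_
    rw [hJ, hJ, hm1]
    linarith [hmin v 0]
  have hfar : ∀ F : Submodule ℝ H, FiniteDimensional ℝ F →
      ∃ R, ∀ x ∈ F, R ≤ ‖x‖ → J (m x) < a := by
    intro F hF
    obtain ⟨R, hR⟩ := CritOrbits.far_below hm1 hI7 hI6 F
    refine ⟨R, fun x hx hxR => ?_⟩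
    rw [hJ, hm1]
    exact hR x hx hxR
  have hcrit : ∀ v, g v = 0 → fderiv ℝ J (m v) = 0 := by
    intro v hv
    have hJd : HasFDerivAt J ((innerSL ℝ (m v).1).comp (ContinuousLinearMap.fst ℝ H W)
        - fderiv ℝ I (m v)) (m v) := by
      have h1 := (hsq (m v).1).comp (m v) (hasFDerivAt_fst (𝕜 := ℝ) (E := H) (F := W))
      have h2 := h1.sub ((hI.differentiable one_ne_zero) (m v)).hasFDerivAt
      exact h2.congr_of_eventuallyEq (Eventually.of_forall fun x => hJ x)
    have hA : A v = innerSL ℝ v := by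
      have := hgA v
      rw [hv, map_zero] at this
      exact (sub_eq_zero.1 this.symm).symm
    have hM : ∀ w : W, fderiv ℝ I (m v) (0, w) = 0 := by
      have := (hm v).2.1
      rw [hMset] at this
      exact this
    rw [hJd.fderiv]
    ext h
    · have : fderiv ℝ I (m v) (h, 0) = ⟪v, h⟫ := by
        have := congrArg (fun f : H →L[ℝ] ℝ => f h) hA
        simpa [A] using this
      simp [hm1, this]
    · simp [hM]
  have hact : ∀ (k k' : G) (u : H × W), σ k (σ k' u) = σ (k * k') u := fun k k' u => by
    rw [map_mul]; rfl
  let orb : Setoid (H × W) :=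
    { r := fun u v => ∃ k : G, σ k u = v
      iseqv :=
        { refl := fun u => ⟨1, by rw [map_one]; rfl⟩
          symm := by
            rintro u _ ⟨k, rfl⟩
            exact ⟨k⁻¹, by rw [hact, inv_mul_cancel, map_one]; rfl⟩
          trans := by
            rintro u _ _ ⟨k, rfl⟩ ⟨k', rfl⟩
            exact ⟨k' * k, (hact _ _ _).symm⟩ } }
  rcases CritOrbits.exists_seq_or_finset orb {u | fderiv ℝ J u = 0} with ⟨u, hu, hdis⟩ | ⟨s, hs⟩
  · refine ⟨u, hu, fun i j hij => Set.disjoint_left.2 fun x hi hj => hdis i j hij ?_⟩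
    exact orb.trans hi (orb.symm hj)
  exfalso
  -- Critical points of `J ∘ m` lie in the orbits of the first components of `s`.
  have hrep : ∀ v, g v = 0 → ∃ u ∈ s, ∃ k : G, (σ k (u.1, 0)).1 = v ∧ J u = J (m v) := by
    intro v hv
    obtain ⟨u, hus, k, hk⟩ := hs (m v) (hcrit v hv)
    refine ⟨u, hus, k, ?_, by rw [← hk, hJinv]⟩
    have h1 : u = (u.1, 0) + (0, u.2) := by simp
    have h2 : (σ k u).1 = (σ k (u.1, 0)).1 := by
      conv_lhs => rw [h1, map_add, Prod.fst_add, htilde, add_zero]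
    rw [← h2, hk, hm1]
  have hnk : ∀ (k : G) (h : H), ‖(σ k (h, 0)).1‖ ≤ ‖h‖ := by
    intro k h
    have h1 := hisom k (h, 0)
    rw [hnrm, hnrm] at h1
    have h2 : √(‖h‖ ^ 2 + ‖(0 : W)‖ ^ 2) = ‖h‖ := by simp
    have h3 : ‖(σ k (h, 0)).1‖ ≤ √(‖(σ k (h, 0)).1‖ ^ 2 + ‖(σ k (h, 0)).2‖ ^ 2) :=
      Real.le_sqrt_of_sq_le (le_add_of_nonneg_right (sq_nonneg _))
    exact h3.trans_eq (h1.trans h2)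
  have hK : ∀ p, g p = 0 → ‖p‖ ≤ ∑ u ∈ s, ‖u.1‖ := by
    intro p hp
    obtain ⟨u, hus, k, rfl, -⟩ := hrep p hp
    exact (hnk k u.1).trans
      (Finset.single_le_sum (f := fun u : H × W => ‖u.1‖) (fun _ _ => norm_nonneg _) hus)
  have hfin : ((fun v => J (m v)) '' {p | g p = 0}).Finite := by
    refine (s.image J).finite_toSet.subset ?_
    rintro _ ⟨p, hp, rfl⟩
    obtain ⟨u, hus, k, -, hk⟩ := hrep p hp
    exact Finset.mem_coe.2 (Finset.mem_image.2 ⟨u, hus, hk⟩)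
  refine CritOrbits.no_finite_critical_levels hΦ hgc hΦeven hΦ0 hdim hI6 hr hsph hfar hK hfin ?_
  intro β hβ
  obtain ⟨mb, hmb, hM⟩ := hMb β hβ ⟨s.image Prod.fst, by
    rintro v ⟨hv, -, -⟩
    have hg0 : g v = 0 := by rw [← norm_eq_zero, ← hnorm, hv, norm_zero]
    obtain ⟨u, hus, k, hk, -⟩ := hrep v hg0
    exact Set.mem_biUnion (Finset.mem_coe.2 (Finset.mem_image_of_mem _ hus)) ⟨k, hk⟩⟩
  simp only [hnorm] at hM
  exact ⟨mb, hmb, fun ε hε => CritOrbits.exists_clustersAt hM hε⟩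
end
end
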